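/- Let v, w ∈ ℂ and let K := [v,w] be the closed line segment joining v and w. Then there exists a function in Exp(K) that is frequently hypercyclic for T₁ on Exp(K) if and only if v ≠ w and both v and w are purely imaginary (i.e., K is a non-degenerate closed line segment of the imaginary axis). -/

import Mathlib

open Filter Complex

/-- Support function `H_K(z) = sup { Re (z·u) : u ∈ K }` of a set `K ⊆ ℂ`. -/
noncomputable def suppFn (K : Set ℂ) (z : ℂ) : ℝ :=
  sSup ((fun u => (z * u).re) '' K)

/-- The norm `‖f‖_{K,n} = sup_z |f z| · exp (−H_K z − |z|/n)`. -/
noncomputable def expNorm (K : Set ℂ) (n : ℕ) (f : ℂ → ℂ) : ℝ :=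
  sSup (Set.range fun z : ℂ => ‖f z‖ * Real.exp (-(suppFn K z) - ‖z‖ / n))

/-- Membership in `Exp(K)`: `f` is entire and all the norms `‖f‖_{K,n}` are finite. -/
def MemExp (K : Set ℂ) (f : ℂ → ℂ) : Prop :=
  Differentiable ℂ f ∧ ∀ n : ℕ, 0 < n →
    BddAbove (Set.range fun z : ℂ => ‖f z‖ * Real.exp (-(suppFn K z) - ‖z‖ / n))

open scoped Classical in
/-- Lower density of a set of natural numbers. -/
noncomputable def lowerDensity (A : Set ℕ) : ℝ :=
  liminf (fun N : ℕ =>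
    (((Finset.range (N + 1)).filter (fun n => n ∈ A)).card : ℝ) / N) atTop

/-- Lower density of a discrete subset of `ℂ`. -/
noncomputable def ldensC (Λ : Set ℂ) : ℝ :=
  liminf (fun r : ℝ => (Nat.card {z : ℂ // z ∈ Λ ∧ ‖z‖ ≤ r} : ℝ) / r) atTop

/-- `f` is hypercyclic for the translation `T₁` on `Exp(K)`. -/
def HCExp (K : Set ℂ) (f : ℂ → ℂ) : Prop :=
  MemExp K f ∧ ∀ g : ℂ → ℂ, MemExp K g → ∀ n : ℕ, 0 < n → ∀ ε > (0 : ℝ),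
    ∃ k : ℕ, expNorm K n (fun z => f (z + (k : ℂ)) - g z) < ε

/-- `f` is frequently hypercyclic for the translation `T₁` on `Exp(K)`. -/
def FHCExp (K : Set ℂ) (f : ℂ → ℂ) : Prop :=
  MemExp K f ∧ ∀ g : ℂ → ℂ, MemExp K g → ∀ n : ℕ, 0 < n → ∀ ε > (0 : ℝ),
    0 < lowerDensity {k : ℕ | expNorm K n (fun z => f (z + (k : ℂ)) - g z) < ε}

/-- `f` is hypercyclic (Birkhoff-universal) for `T₁` on `H(ℂ)`. -/
def HCEnt (f : ℂ → ℂ) : Prop :=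
  Differentiable ℂ f ∧ ∀ g : ℂ → ℂ, Differentiable ℂ g → ∀ R > (0 : ℝ), ∀ ε > (0 : ℝ),
    ∃ k : ℕ, ∀ z : ℂ, ‖z‖ ≤ R → ‖f (z + (k : ℂ)) - g z‖ < ε

/-- `f` is frequently hypercyclic (frequently Birkhoff-universal) for `T₁` on `H(ℂ)`. -/
def FHCEnt (f : ℂ → ℂ) : Prop :=
  Differentiable ℂ f ∧ ∀ g : ℂ → ℂ, Differentiable ℂ g → ∀ R > (0 : ℝ), ∀ ε > (0 : ℝ),
    0 < lowerDensity {k : ℕ | ∀ z : ℂ, ‖z‖ ≤ R → ‖f (z + (k : ℂ)) - g z‖ < ε}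

/-- `f` is an entire function of (finite) exponential type. -/
def ExpType (f : ℂ → ℂ) : Prop :=
  Differentiable ℂ f ∧ ∃ C τ : ℝ, ∀ z : ℂ, ‖f z‖ ≤ C * Real.exp (τ * ‖z‖)

/-- The indicator function `h_f(θ) = limsup_{r→∞} log |f(r e^{iθ})| / r`. -/
noncomputable def indicatorFn (f : ℂ → ℂ) (θ : ℝ) : ℝ :=
  limsup (fun r : ℝ => Real.log ‖f ((r : ℂ) * Complex.exp (θ * Complex.I))‖ / r) atTop

/-! **Necessity.** Comparing `f (z + k)` with `z * exp (w * z)`, the minimum principle gives a zero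
of `f` within `1 / 4` of every `k` in a set of positive lower density. If `v = w` or `Re v < Re w`,
then `f z * exp (-w * z)` has exponential type zero on a half-plane containing the positive reals.
On discs of radius comparable to `N` tangent to its boundary, Blaschke factors show that the zeros
near `k ≤ N` gain a factor `exp (-σ log N)`, while the growth costs only `exp (ε log N)`; hence
`f = 0`. If `Re v = Re w ≠ 0`, then `f k → 0`, or translates of `f` close to `0` at infinity force
`f = 0`.

**Sufficiency.** Translations along `ℝ` do not change `H_K` when `K ⊆ iℝ`. Functions bounded by
`exp H_K / (1 + |z|⁴)` are dense in `Exp(K)`: reduce the type slightly by a dilation, multiply by a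
wide Gaussian and interpolate at the integers by finite cardinal series, which obey a bound
`O(exp H_K)`, and multiply by the fourth power of a slowly varying `sin z / z`. Translate the
members `G l` of a countable dense sequence to the centres of disjoint real intervals of length
comparable to `l`, placed so that those belonging to each `l` have positive density. The sum of the
translates is frequently hypercyclic, since around an interval of level `l` all the others
contribute only `O(1 / l)`. -/

open scoped Topology ComplexConjugate Real

section LowerDensity

variable {A B : Set ℕ}

open scoped Classical in
lemma lowerDensity_pos_of_mul_le_card {δ : ℝ} (hδ : 0 < δ) {N₀ : ℕ}
    (h : ∀ N ≥ N₀, δ * N ≤ ((Finset.range (N + 1)).filter (fun n => n ∈ A)).card) :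
    0 < lowerDensity A := by
  refine hδ.trans_le (le_liminf_of_le (isCoboundedUnder_ge_of_le _ (x := 2) fun N => ?_) ?_)
  · have hcard : (((Finset.range (N + 1)).filter (fun n => n ∈ A)).card : ℝ) ≤ N + 1 := by
      exact_mod_cast (Finset.card_filter_le _ _).trans (Finset.card_range _).le
    rcases N.eq_zero_or_pos with rfl | hN
    · simp
    · have hN' : (1 : ℝ) ≤ N := by exact_mod_cast hN
      rw [div_le_iff₀ (by linarith)]
      linarith
  · filter_upwards [eventually_ge_atTop N₀, eventually_gt_atTop 0] with N hN hpos
    rw [le_div_iff₀ (by exact_mod_cast hpos)]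
    exact h N hN

open scoped Classical in
lemma exists_mul_le_card_of_lowerDensity_pos (h : 0 < lowerDensity A) :
    ∃ δ > (0 : ℝ), ∃ N₀ : ℕ, ∀ N ≥ N₀,
      δ * N ≤ ((Finset.range (N + 1)).filter (fun n => n ∈ A)).card := by
  have hev := eventually_lt_of_lt_liminf (half_lt_self h)
    ⟨0, eventually_map.2 (Eventually.of_forall fun N => by positivity)⟩
  obtain ⟨N₀, hN₀⟩ := eventually_atTop.1 (hev.and (eventually_gt_atTop 0))
  refine ⟨_, half_pos h, N₀, fun N hN => ?_⟩
  obtain ⟨hlt, hpos⟩ := hN₀ N hN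
  exact ((lt_div_iff₀ (by exact_mod_cast hpos)).1 hlt).le

lemma lowerDensity_pos_of_forall_ge_mem (hA : 0 < lowerDensity A) {M : ℕ}
    (h : ∀ k ∈ A, M ≤ k → k ∈ B) : 0 < lowerDensity B := by
  classical
  obtain ⟨δ, hδ, N₀, hN₀⟩ := exists_mul_le_card_of_lowerDensity_pos hA
  obtain ⟨N₁, hN₁⟩ := exists_nat_ge (2 * M / δ)
  refine lowerDensity_pos_of_mul_le_card (half_pos hδ) (N₀ := max N₀ N₁) fun N hN => ?_
  have hcard : ((Finset.range (N + 1)).filter (fun n => n ∈ A)).card ≤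
      M + ((Finset.range (N + 1)).filter (fun n => n ∈ B)).card := by
    calc _ ≤ (Finset.range M ∪ (Finset.range (N + 1)).filter (fun n => n ∈ B)).card := by
          refine Finset.card_le_card fun k hk => ?_
          simp only [Finset.mem_filter, Finset.mem_range, Finset.mem_union] at hk ⊢
          exact (lt_or_ge k M).imp_right fun hMk => ⟨hk.1, h k hk.2 hMk⟩
      _ ≤ _ := (Finset.card_union_le _ _).trans_eq (by rw [Finset.card_range])
  have hcard' : (((Finset.range (N + 1)).filter (fun n => n ∈ A)).card : ℝ) ≤
      M + ((Finset.range (N + 1)).filter (fun n => n ∈ B)).card := by exact_mod_cast hcard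
  have hNM : 2 * M ≤ δ * N := by
    rw [div_le_iff₀' hδ] at hN₁
    exact hN₁.trans (by gcongr; exact (le_max_right _ _).trans hN)
  linarith [hN₀ N ((le_max_left _ _).trans hN)]

lemma lowerDensity_pos_of_injective {a : ℕ → ℕ} (ha : Function.Injective a) {c : ℕ} (hc : 0 < c)
    (h : ∀ m, a m ≤ c * (m + 1)) (hA : ∀ m, a m ∈ A) : 0 < lowerDensity A := by
  classical
  refine lowerDensity_pos_of_mul_le_card (δ := (2 * c : ℝ)⁻¹) (by positivity) (N₀ := c)
    fun N hN => ?_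
  have hcard : N / c ≤ ((Finset.range (N + 1)).filter (fun n => n ∈ A)).card := by
    rw [← Finset.card_range (N / c), ← Finset.card_image_of_injective _ ha]
    refine Finset.card_le_card (Finset.image_subset_iff.2 fun m hm => ?_)
    have hmN : a m ≤ N := (h m).trans
      ((Nat.mul_le_mul_left c (Finset.mem_range.1 hm)).trans (Nat.mul_div_le N c))
    exact Finset.mem_filter.2 ⟨Finset.mem_range.2 (Nat.lt_succ_of_le hmN), hA m⟩
  have hdiv : N ≤ 2 * c * (N / c) := by
    have hone : c * 1 ≤ c * (N / c) := Nat.mul_le_mul_left c ((Nat.one_le_div_iff hc).2 hN)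
    linarith [Nat.lt_mul_div_succ N hc]
  rw [inv_mul_le_iff₀ (by positivity)]
  exact_mod_cast hdiv.trans (Nat.mul_le_mul_left _ hcard)

lemma infinite_of_lowerDensity_pos (h : 0 < lowerDensity A) : A.Infinite := by
  intro hfin
  obtain ⟨M, hM⟩ := hfin.bddAbove
  have hempty : 0 < lowerDensity ∅ :=
    lowerDensity_pos_of_forall_ge_mem h (M := M + 1) fun k hk hMk => by
      have := hM hk
      omega
  simp [lowerDensity] at hempty

end LowerDensity

lemma log_add_one_sub_log_le {x : ℝ} (hx : 0 < x) : Real.log (x + 1) - Real.log x ≤ 1 / x := by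
  rw [← Real.log_div (by positivity) hx.ne']
  refine (Real.log_le_sub_one_of_pos (by positivity)).trans_eq ?_
  field_simp
  ring

lemma sum_range_div_succ_sub_sum_div (x : ℕ → ℝ) (N : ℕ) :
    ∑ k ∈ Finset.range (N + 2), x k / k - (∑ k ∈ Finset.range (N + 2), x k) / (N + 2) =
      ∑ k ∈ Finset.range (N + 1), x k / k - (∑ k ∈ Finset.range (N + 1), x k) / (N + 1) +
        (∑ k ∈ Finset.range (N + 2), x k) / ((N + 1) * (N + 2)) := by
  rw [Finset.sum_range_succ _ (N + 1), Finset.sum_range_succ _ (N + 1)]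
  push_cast
  field_simp
  ring

lemma exists_mul_log_sub_le_sum_div {x : ℕ → ℝ} (hx : ∀ k, 0 ≤ x k) {δ : ℝ} (hδ : 0 ≤ δ) {N₀ : ℕ}
    (h : ∀ N ≥ N₀, δ * N ≤ ∑ k ∈ Finset.range (N + 1), x k) :
    ∃ c : ℝ, ∀ N ≥ N₀, δ * Real.log N - c ≤ ∑ k ∈ Finset.range (N + 1), x k / k := by
  set a : ℕ → ℝ := fun N => ∑ k ∈ Finset.range (N + 1), x k
  set s : ℕ → ℝ := fun N => ∑ k ∈ Finset.range (N + 1), x k / k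
  have ha : ∀ N, 0 ≤ a N := fun N => Finset.sum_nonneg fun k _ => hx k
  have habel : ∀ N, s (N + 1) - a (N + 1) / (N + 2) =
      s N - a N / (N + 1) + a (N + 1) / ((N + 1) * (N + 2)) :=
    sum_range_div_succ_sub_sum_div x
  have hlog : ∀ N ≥ N₀, δ * (Real.log (N + 2) - Real.log (N₀ + 2)) ≤
      s N - a N / (N + 1) + a N₀ / (N₀ + 1) := by
    intro N hN
    induction N, hN using Nat.le_induction with
    | base =>
      have : 0 ≤ s N₀ := Finset.sum_nonneg fun k _ => div_nonneg (hx k) k.cast_nonneg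
      linarith
    | succ N hN ih =>
      have hinc : δ / (N + 2) ≤ a (N + 1) / ((N + 1) * (N + 2)) := by
        rw [div_le_div_iff₀ (by positivity) (by positivity), ← mul_assoc]
        gcongr
        exact_mod_cast h (N + 1) (by omega)
      have hstep := mul_le_mul_of_nonneg_left
        (log_add_one_sub_log_le (by positivity : (0 : ℝ) < N + 2)) hδ
      rw [mul_one_div] at hstep
      rw [Nat.cast_succ, show (N : ℝ) + 1 + 1 = N + 2 by ring, add_right_comm (N : ℝ) 1 2]
      linarith [habel N]
  refine ⟨δ * Real.log (N₀ + 2) + a N₀ / (N₀ + 1), fun N hN => ?_⟩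
  have haN : 0 ≤ a N / (N + 1) := div_nonneg (ha N) (by positivity)
  have hmono : δ * Real.log N ≤ δ * Real.log (N + 2) := by
    rcases N.eq_zero_or_pos with rfl | hpos
    · simpa using mul_nonneg hδ (Real.log_nonneg one_le_two)
    · gcongr
      linarith
  linarith [hlog N hN]

open scoped Classical in
lemma exists_mul_log_sub_le_sum_inv_of_lowerDensity_pos {A : Set ℕ} (h : 0 < lowerDensity A) :
    ∃ σ > (0 : ℝ), ∃ c : ℝ, ∀ᶠ N : ℕ in atTop,
      σ * Real.log N - c ≤ ∑ k ∈ (Finset.range (N + 1)).filter (fun k => k ∈ A), (k : ℝ)⁻¹ := by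
  obtain ⟨δ, hδ, N₀, hcard⟩ := exists_mul_le_card_of_lowerDensity_pos h
  obtain ⟨c, hc⟩ := exists_mul_log_sub_le_sum_div (x := fun k => if k ∈ A then 1 else 0)
    (fun k => by positivity) hδ.le (N₀ := N₀) (by simpa using hcard)
  refine ⟨δ, hδ, c, (eventually_ge_atTop N₀).mono fun N hN => (hc N hN).trans_eq ?_⟩
  rw [Finset.sum_filter]
  exact Finset.sum_congr rfl fun k _ => by split_ifs <;> simp

section Blaschke

lemma norm_sq_sub_conj_mul_of_mem_sphere {a c z : ℂ} {R : ℝ} (hz : z ∈ Metric.sphere c R) :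
    ‖R ^ 2 - conj (a - c) * (z - c)‖ = R * ‖z - a‖ := by
  have hR : ‖z - c‖ = R := mem_sphere_iff_norm.1 hz
  have hfactor : R ^ 2 - conj (a - c) * (z - c) = (z - c) * conj (z - a) := by
    have hzz : (z - c) * conj (z - c) = (R : ℂ) ^ 2 := by rw [mul_conj', hR]
    rw [← hzz, show z - a = (z - c) - (a - c) by ring, map_sub conj (z - c)]
    ring
  rw [hfactor, norm_mul, norm_conj, hR]

lemma norm_sq_sub_conj_mul_pos {a c z : ℂ} {R : ℝ} (ha : a ∈ Metric.ball c R)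
    (hz : z ∈ Metric.ball c R) : 0 < ‖R ^ 2 - conj (a - c) * (z - c)‖ := by
  rw [mem_ball_iff_norm] at ha hz
  have hlt : ‖conj (a - c) * (z - c)‖ < ‖(R : ℂ) ^ 2‖ := by
    rw [norm_mul, norm_conj, norm_pow, norm_real, Real.norm_eq_abs, sq_abs, sq]
    exact mul_lt_mul'' ha hz (norm_nonneg _) (norm_nonneg _)
  exact (sub_pos.2 hlt).trans_le (norm_sub_norm_le _ _)

lemma exists_differentiableOn_norm_mul_eq {U : Set ℂ} {a c : ℂ} {R : ℝ} (hU : U ∈ 𝓝 a)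
    (hR : 0 < R) {f : ℂ → ℂ} (hf : DifferentiableOn ℂ f U) (hfa : f a = 0) :
    ∃ g : ℂ → ℂ, DifferentiableOn ℂ g U ∧
      ∀ z, ‖g z‖ * (R * ‖z - a‖) = ‖f z‖ * ‖R ^ 2 - conj (a - c) * (z - c)‖ := by
  have hdslope : ∀ z, (z - a) * dslope f a z = f z := fun z => by
    simpa [hfa] using sub_smul_dslope f a z
  refine ⟨fun z => dslope f a z * ((R ^ 2 - conj (a - c) * (z - c)) / R),
    ((differentiableOn_dslope hU).2 hf).mul (by fun_prop), fun z => ?_⟩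
  rw [← hdslope z, norm_mul, norm_mul, norm_div, norm_real, Real.norm_of_nonneg hR.le]
  field_simp

theorem norm_mul_prod_le_mul_prod_of_zeros {U : Set ℂ} (hU : IsOpen U) {c : ℂ} {R C : ℝ}
    (hR : 0 < R) (hcU : Metric.closedBall c R ⊆ U) {S : Finset ℂ} (hS : ↑S ⊆ Metric.ball c R)
    {f : ℂ → ℂ} (hf : DifferentiableOn ℂ f U) (hfC : ∀ z ∈ Metric.sphere c R, ‖f z‖ ≤ C)
    (hfS : ∀ a ∈ S, f a = 0) {z : ℂ} (hz : z ∈ Metric.ball c R) :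
    ‖f z‖ * ∏ a ∈ S, ‖R ^ 2 - conj (a - c) * (z - c)‖ ≤ C * ∏ a ∈ S, (R * ‖z - a‖) := by
  induction S using Finset.induction_on generalizing f with
  | empty =>
    rw [Finset.prod_empty, Finset.prod_empty, mul_one, mul_one]
    refine norm_le_of_forall_mem_frontier_norm_le Metric.isBounded_ball
      ((hf.mono ?_).diffContOnCl) ?_ (subset_closure hz)
    · rwa [closure_ball c hR.ne']
    · rwa [frontier_ball c hR.ne']
  | insert a S ha ih =>
    have haB : a ∈ Metric.ball c R := hS (Finset.mem_insert_self a S)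
    obtain ⟨g, hg, hgf⟩ := exists_differentiableOn_norm_mul_eq (c := c)
      (hU.mem_nhds (hcU (Metric.ball_subset_closedBall haB))) hR hf
      (hfS a (Finset.mem_insert_self a S))
    have hgC : ∀ z ∈ Metric.sphere c R, ‖g z‖ ≤ C := fun z hz => by
      have hza : 0 < R * ‖z - a‖ := by
        refine mul_pos hR (norm_pos_iff.2 (sub_ne_zero.2 ?_))
        rintro rfl
        exact (Metric.mem_ball.1 haB).ne (Metric.mem_sphere.1 hz)
      have := hgf z
      rw [norm_sq_sub_conj_mul_of_mem_sphere hz, mul_left_inj' hza.ne'] at this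
      exact this.trans_le (hfC z hz)
    have hgS : ∀ b ∈ S, g b = 0 := fun b hb => by
      have hba : b - a ≠ 0 := sub_ne_zero.2 fun h => ha (h ▸ hb)
      have := hgf b
      rw [hfS b (Finset.mem_insert_of_mem hb), norm_zero, zero_mul] at this
      exact norm_eq_zero.1 ((mul_eq_zero_iff_right (by positivity)).1 this)
    have := ih ((Finset.coe_subset.2 (Finset.subset_insert a S)).trans hS) hg hgC hgS
    rw [Finset.prod_insert ha, Finset.prod_insert ha, ← mul_assoc, ← hgf z]
    calc ‖g z‖ * (R * ‖z - a‖) * ∏ a ∈ S, ‖R ^ 2 - conj (a - c) * (z - c)‖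
        = R * ‖z - a‖ * (‖g z‖ * ∏ a ∈ S, ‖R ^ 2 - conj (a - c) * (z - c)‖) := by ring
      _ ≤ R * ‖z - a‖ * (C * ∏ a ∈ S, (R * ‖z - a‖)) := by gcongr
      _ = C * (R * ‖z - a‖ * ∏ a ∈ S, (R * ‖z - a‖)) := by ring

lemma norm_one_sub_sq_add_re_le {t : ℝ} (ht0 : 0 ≤ t) (ht1 : t ≤ 1) {a : ℂ}
    (ha : (1 - t) * ‖a‖ ^ 2 ≤ a.re) : ‖1 - a‖ ^ 2 + a.re ≤ ‖1 + t * conj a‖ ^ 2 := by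
  have hre0 : 0 ≤ a.re := (mul_nonneg (sub_nonneg.2 ht1) (sq_nonneg _)).trans ha
  have hnorm : ‖a‖ ^ 2 = a.re ^ 2 + a.im ^ 2 := by rw [← normSq_eq_norm_sq, normSq_apply]; ring
  have hsub : ‖1 - a‖ ^ 2 = 1 - 2 * a.re + ‖a‖ ^ 2 := by
    rw [hnorm, ← normSq_eq_norm_sq, normSq_apply, sub_re, one_re, sub_im, one_im]
    ring
  have hadd : ‖1 + t * conj a‖ ^ 2 = 1 + 2 * t * a.re + t ^ 2 * ‖a‖ ^ 2 := by
    rw [hnorm, ← normSq_eq_norm_sq, normSq_apply, add_re, one_re, re_ofReal_mul, conj_re, add_im,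
      one_im, im_ofReal_mul, conj_im]
    ring
  rw [hsub, hadd]
  nlinarith

lemma mul_norm_one_sub_le_exp_mul_norm {R : ℝ} (hR : 1 ≤ R) {a : ℂ} (ha : ‖a‖ ^ 2 ≤ R * a.re) :
    R * ‖1 - a‖ ≤ Real.exp (-(a.re / (1 + ‖a‖) ^ 2 / 2)) *
      ‖(R : ℂ) ^ 2 - conj (a - R) * (1 - R)‖ := by
  have hR0 : 0 < R := by linarith
  set t : ℝ := 1 - R⁻¹ with ht
  set κ : ℝ := a.re / (1 + ‖a‖) ^ 2 with hκ
  have ht0 : 0 ≤ t := sub_nonneg.2 (inv_le_one_of_one_le₀ hR)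
  have ht1 : t ≤ 1 := sub_le_self _ (by positivity)
  have hfactor : (R : ℂ) ^ 2 - conj (a - R) * (1 - R) = R * (1 + t * conj a) := by
    have hRt : (R : ℂ) * t = R - 1 := by
      rw [ht, ofReal_sub, ofReal_one, ofReal_inv, mul_sub, mul_one,
        mul_inv_cancel₀ (ofReal_ne_zero.2 hR0.ne')]
    rw [map_sub, conj_ofReal, mul_add, ← mul_assoc, hRt]
    ring
  have hgap : ‖1 - a‖ ^ 2 + a.re ≤ ‖1 + t * conj a‖ ^ 2 :=
    norm_one_sub_sq_add_re_le ht0 ht1 (by rwa [ht, sub_sub_cancel, inv_mul_le_iff₀ hR0])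
  have hle : ‖1 + t * conj a‖ ≤ 1 + ‖a‖ := by
    refine (norm_add_le _ _).trans ?_
    rw [norm_one, norm_mul, norm_real, norm_conj, Real.norm_of_nonneg ht0]
    gcongr
    exact mul_le_of_le_one_left (norm_nonneg a) ht1
  have hκle : κ * ‖1 + t * conj a‖ ^ 2 ≤ a.re := by
    have hre0 : 0 ≤ a.re := nonneg_of_mul_nonneg_right ((sq_nonneg _).trans ha) hR0
    rw [hκ, div_mul_eq_mul_div, div_le_iff₀ (by positivity)]
    gcongr
  have hsq : ‖1 - a‖ ^ 2 ≤ (Real.exp (-(κ / 2)) * ‖1 + t * conj a‖) ^ 2 := by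
    rw [mul_pow, ← Real.exp_nat_mul, show ((2 : ℕ) : ℝ) * -(κ / 2) = -κ by push_cast; ring]
    nlinarith [Real.add_one_le_exp (-κ), sq_nonneg ‖1 + t * conj a‖]
  rw [hfactor, norm_mul, norm_real, Real.norm_of_nonneg hR0.le, mul_left_comm]
  gcongr
  exact le_of_sq_le_sq hsq (by positivity)

lemma norm_le_mul_exp_neg_sum_of_zeros {U : Set ℂ} (hU : IsOpen U) {R C : ℝ} (hR : 1 ≤ R)
    (hRU : Metric.closedBall (R : ℂ) R ⊆ U) {F : ℂ → ℂ} (hF : DifferentiableOn ℂ F U)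
    (hFC : ∀ z ∈ Metric.sphere (R : ℂ) R, ‖F z‖ ≤ C) {S : Finset ℂ} (hFS : ∀ a ∈ S, F a = 0)
    (hS : ∀ a ∈ S, 0 < a.re ∧ ‖a‖ ^ 2 ≤ R * a.re) :
    ‖F 1‖ ≤ C * Real.exp (-(∑ a ∈ S, a.re / (1 + ‖a‖) ^ 2) / 2) := by
  have hR0 : 0 < R := by linarith
  have hball : ∀ a : ℂ, 0 < a.re → ‖a‖ ^ 2 ≤ R * a.re → a ∈ Metric.ball (R : ℂ) R := by
    intro a hpos ha
    rw [Metric.mem_ball, dist_eq]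
    refine lt_of_pow_lt_pow_left₀ 2 hR0.le ?_
    rw [← normSq_eq_norm_sq, normSq_apply] at ha ⊢
    rw [sub_re, sub_im, ofReal_re, ofReal_im]
    nlinarith
  have hone : (1 : ℂ) ∈ Metric.ball (R : ℂ) R := hball 1 (by simp) (by simpa using hR)
  have hC : 0 ≤ C := (norm_nonneg _).trans (hFC 0 (by simp [hR0.le]))
  set P : ℝ := ∏ a ∈ S, ‖(R : ℂ) ^ 2 - conj (a - R) * (1 - R)‖
  have hexp : Real.exp (-(∑ a ∈ S, a.re / (1 + ‖a‖) ^ 2) / 2) =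
      ∏ a ∈ S, Real.exp (-(a.re / (1 + ‖a‖) ^ 2 / 2)) := by
    rw [← Real.exp_sum, neg_div, Finset.sum_div, Finset.sum_neg_distrib]
  have hbound : ‖F 1‖ * P ≤
      C * Real.exp (-(∑ a ∈ S, a.re / (1 + ‖a‖) ^ 2) / 2) * P := by
    calc ‖F 1‖ * P ≤ C * ∏ a ∈ S, (R * ‖1 - a‖) :=
          norm_mul_prod_le_mul_prod_of_zeros hU hR0 hRU
            (fun a ha => hball a (hS a ha).1 (hS a ha).2) hF hFC hFS hone
      _ ≤ C * ∏ a ∈ S, (Real.exp (-(a.re / (1 + ‖a‖) ^ 2 / 2)) *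
            ‖(R : ℂ) ^ 2 - conj (a - R) * (1 - R)‖) := by
          refine mul_le_mul_of_nonneg_left (Finset.prod_le_prod (fun a _ => by positivity) ?_) hC
          exact fun a ha => mul_norm_one_sub_le_exp_mul_norm hR (hS a ha).2
      _ = _ := by rw [Finset.prod_mul_distrib, hexp, mul_assoc]
  refine le_of_mul_le_mul_right hbound (Finset.prod_pos fun a ha => ?_)
  exact norm_sq_sub_conj_mul_pos (hball a (hS a ha).1 (hS a ha).2) hone

end Blaschke

section HalfPlane

lemma one_le_cos_add_mul_sin {θ : ℝ} (hθ : |θ| ≤ Real.pi / 2) :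
    1 ≤ Real.cos θ + θ * Real.sin θ := by
  have hsin : θ * Real.sin θ = |θ| * Real.sin |θ| := by
    rcases abs_choice θ with h | h <;> simp [h]
  have hhalf : 1 / 2 * |θ| ≤ Real.sin |θ| := by
    refine le_trans ?_ (Real.mul_le_sin (abs_nonneg θ) hθ)
    gcongr ?_ * _
    rw [div_le_div_iff₀ two_pos Real.pi_pos]
    linarith [Real.pi_le_four]
  rw [hsin]
  nlinarith [Real.one_sub_sq_div_two_le_cos (x := θ), abs_nonneg θ, sq_abs θ]

lemma norm_le_re_mul_log_sub_log {ζ : ℂ} (hζ : 0 < ζ.re) {M : ℝ} (hM : ‖ζ‖ ≤ M) :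
    ‖ζ‖ ≤ (ζ * ((Real.log M + 1 : ℝ) - log ζ)).re := by
  have hpos : 0 < ‖ζ‖ := hζ.trans_le (re_le_norm ζ)
  have hlog : Real.log ‖ζ‖ ≤ Real.log M := Real.log_le_log hpos hM
  have hexpand : (ζ * ((Real.log M + 1 : ℝ) - log ζ)).re =
      ζ.re * (Real.log M + 1 - Real.log ‖ζ‖) + ζ.im * ζ.arg := by
    simp [mul_re, log_re, log_im]
  have htrig := one_le_cos_add_mul_sin (abs_arg_le_pi_div_two_iff.2 hζ.le)
  calc ‖ζ‖ ≤ ‖ζ‖ * (Real.cos ζ.arg + ζ.arg * Real.sin ζ.arg) :=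
        le_mul_of_one_le_right hpos.le htrig
    _ = ζ.re + ζ.im * ζ.arg := by
        linear_combination norm_mul_cos_arg ζ + ζ.arg * norm_mul_sin_arg ζ
    _ ≤ _ := by
        rw [hexpand]
        gcongr
        exact le_mul_of_one_le_right hζ.le (by linarith)

lemma norm_le_exp_re_sub_sum_of_zeros {U : Set ℂ} (hU : IsOpen U) {R C : ℝ} (hR : 1 ≤ R)
    (hRU : Metric.closedBall (R : ℂ) R ⊆ U) {F Φ : ℂ → ℂ} (hF : DifferentiableOn ℂ F U)
    (hΦ : DifferentiableOn ℂ Φ U)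
    (hFΦ : ∀ z ∈ Metric.sphere (R : ℂ) R, ‖F z‖ ≤ C * Real.exp (Φ z).re)
    {S : Finset ℂ} (hFS : ∀ a ∈ S, F a = 0) (hS : ∀ a ∈ S, 0 < a.re ∧ ‖a‖ ^ 2 ≤ R * a.re) :
    ‖F 1‖ ≤ C * Real.exp ((Φ 1).re - (∑ a ∈ S, a.re / (1 + ‖a‖) ^ 2) / 2) := by
  have hnorm : ∀ z, ‖F z * exp (-Φ z)‖ = ‖F z‖ / Real.exp (Φ z).re := fun z => by
    rw [norm_mul, norm_exp, neg_re, Real.exp_neg, div_eq_mul_inv]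
  have h1 := norm_le_mul_exp_neg_sum_of_zeros (F := fun z => F z * exp (-Φ z)) (C := C) hU hR hRU
    (by fun_prop)
    (fun z hz => by
      rw [hnorm, div_le_iff₀ (Real.exp_pos _)]
      exact hFΦ z hz)
    (fun a ha => by rw [hFS a ha, zero_mul]) hS
  rwa [hnorm, div_le_iff₀ (Real.exp_pos _), mul_assoc, ← Real.exp_add, neg_div, neg_add_eq_sub]
    at h1

variable {G : ℂ → ℂ} {τ : ℝ}

lemma closedBall_ofReal_subset_re_add_pos (hτ : 0 < τ) (R : ℝ) :
    Metric.closedBall (R : ℂ) R ⊆ {ζ | 0 < (ζ + τ).re} := fun ζ hζ => by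
  have habs := (abs_re_le_norm (ζ - R)).trans (mem_closedBall_iff_norm.1 hζ)
  rw [sub_re, ofReal_re] at habs
  change 0 < ζ.re + τ
  linarith [neg_le_of_abs_le habs]

lemma norm_le_exp_sub_sum_of_zeros (hG : DifferentiableOn ℂ G {ζ | 0 < ζ.re}) {C ε : ℝ}
    (hε : 0 ≤ ε) (hGC : ∀ ζ, 0 < ζ.re → ‖G ζ‖ ≤ C * Real.exp (ε * ‖ζ‖)) (hτ : 0 < τ)
    {R : ℝ} (hR : 1 ≤ R) {S : Finset ℂ} (hGS : ∀ a ∈ S, G (a + τ) = 0)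
    (hS : ∀ a ∈ S, 0 < a.re ∧ ‖a‖ ^ 2 ≤ R * a.re) :
    ‖G (1 + τ)‖ ≤ C * Real.exp (ε * ((1 + τ) * (Real.log (2 * R + τ) + 1)) -
      (∑ a ∈ S, a.re / (1 + ‖a‖) ^ 2) / 2) := by
  set M : ℝ := 2 * R + τ
  have hC : 0 ≤ C := nonneg_of_mul_nonneg_left
    ((norm_nonneg _).trans (hGC 1 (by simp))) (Real.exp_pos _)
  set Φ : ℂ → ℂ := fun ζ => ε * ((ζ + τ) * ((Real.log M + 1 : ℝ) - log (ζ + τ)))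
  set U : Set ℂ := {ζ | 0 < (ζ + τ).re}
  have hU : IsOpen U := isOpen_lt continuous_const (by fun_prop)
  have hRU : Metric.closedBall (R : ℂ) R ⊆ U := closedBall_ofReal_subset_re_add_pos hτ R
  have hΦ : DifferentiableOn ℂ Φ U := by
    have hlog : DifferentiableOn ℂ (fun ζ : ℂ => log (ζ + τ)) U :=
      DifferentiableOn.clog (by fun_prop) fun ζ hζ => Or.inl hζ
    fun_prop
  have hGΦ : ∀ ζ ∈ Metric.sphere (R : ℂ) R, ‖G (ζ + τ)‖ ≤ C * Real.exp (Φ ζ).re := fun ζ hζ => by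
    have hpos : 0 < (ζ + τ).re := hRU (Metric.sphere_subset_closedBall hζ)
    have hle : ‖ζ + τ‖ ≤ M := by
      have hR0 : ‖(R : ℂ)‖ = R := by rw [norm_real, Real.norm_of_nonneg (by linarith)]
      have hτ0 : ‖(τ : ℂ)‖ = τ := by rw [norm_real, Real.norm_of_nonneg hτ.le]
      calc ‖ζ + τ‖ = ‖(ζ - R) + R + τ‖ := by rw [sub_add_cancel]
        _ ≤ ‖ζ - R‖ + ‖(R : ℂ)‖ + ‖(τ : ℂ)‖ := norm_add₃_le
        _ = M := by rw [mem_sphere_iff_norm.1 hζ, hR0, hτ0, ← two_mul]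
    refine (hGC _ hpos).trans ?_
    rw [re_ofReal_mul]
    gcongr
    exact norm_le_re_mul_log_sub_log hpos hle
  have hΦ1 : (Φ 1).re ≤ ε * ((1 + τ) * (Real.log M + 1)) := by
    have : Φ 1 = (ε * ((1 + τ) * (Real.log M + 1 - Real.log (1 + τ))) : ℝ) := by
      simp only [Φ]
      push_cast [ofReal_log (by linarith : 0 ≤ 1 + τ)]
      ring
    rw [this, ofReal_re]
    gcongr
    linarith [Real.log_nonneg (by linarith : 1 ≤ 1 + τ)]
  refine (norm_le_exp_re_sub_sum_of_zeros (F := fun ζ => G (ζ + τ)) hU hR hRU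
    (hG.comp (by fun_prop) fun ζ hζ => hζ) hΦ hGΦ hGS hS).trans ?_
  gcongr

lemma norm_le_exp_sub_sum_inv_of_zeros (hG : DifferentiableOn ℂ G {ζ | 0 < ζ.re}) {C ε : ℝ}
    (hε : 0 ≤ ε) (hGC : ∀ ζ, 0 < ζ.re → ‖G ζ‖ ≤ C * Real.exp (ε * ‖ζ‖)) (hτ : 0 < τ)
    {N : ℕ} (hN : 1 ≤ N) {T : Finset ℕ} (hTN : ∀ k ∈ T, k ≤ N) {a : ℕ → ℂ} (ha : Set.InjOn a T)
    (hGa : ∀ k ∈ T, G (a k + τ) = 0) {κ : ℝ} (hκ : 0 < κ) (hpos : ∀ k ∈ T, 0 < (a k).re)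
    (hsq : ∀ k ∈ T, κ * ‖a k‖ ^ 2 ≤ k * (a k).re)
    (hinv : ∀ k ∈ T, κ * (k : ℝ)⁻¹ ≤ (a k).re / (1 + ‖a k‖) ^ 2) :
    ‖G (1 + τ)‖ ≤ C * Real.exp (ε * ((1 + τ) * (Real.log (2 / κ + 2 + τ) + Real.log N + 1)) -
      κ * (∑ k ∈ T, (k : ℝ)⁻¹) / 2) := by
  have hN' : (1 : ℝ) ≤ N := by exact_mod_cast hN
  have hC : 0 ≤ C := nonneg_of_mul_nonneg_left
    ((norm_nonneg _).trans (hGC 1 (by simp))) (Real.exp_pos _)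
  set R : ℝ := N / κ + 1 with hR
  have hlog : Real.log (2 * R + τ) ≤ Real.log (2 / κ + 2 + τ) + Real.log N := by
    rw [← Real.log_mul (by positivity) (by positivity)]
    refine Real.log_le_log (by positivity) ?_
    rw [hR, show 2 * (N / κ + 1) + τ = 2 / κ * N + (2 + τ) by ring, add_assoc, add_mul]
    gcongr
    exact le_mul_of_one_le_right (by positivity) hN'
  have hsum : κ * ∑ k ∈ T, (k : ℝ)⁻¹ ≤ ∑ b ∈ T.image a, b.re / (1 + ‖b‖) ^ 2 := by
    rw [Finset.sum_image ha, Finset.mul_sum]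
    exact Finset.sum_le_sum hinv
  refine (norm_le_exp_sub_sum_of_zeros hG hε hGC hτ (R := R) (S := T.image a)
    (le_add_of_nonneg_left (by positivity)) (Finset.forall_mem_image.2 hGa)
    (Finset.forall_mem_image.2 fun k hk => ⟨hpos k hk, ?_⟩)).trans ?_
  · have hkR : k ≤ κ * R := by
      have : (k : ℝ) ≤ N := by exact_mod_cast hTN k hk
      rw [hR, mul_add, mul_div_cancel₀ _ hκ.ne']
      linarith
    refine le_of_mul_le_mul_left ((hsq k hk).trans ?_) hκ
    rw [← mul_assoc]
    exact mul_le_mul_of_nonneg_right hkR (hpos k hk).le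
  · gcongr

lemma apply_one_add_eq_zero_of_zeros (hG : DifferentiableOn ℂ G {ζ | 0 < ζ.re})
    (hGC : ∀ ε > (0 : ℝ), ∃ C : ℝ, ∀ ζ, 0 < ζ.re → ‖G ζ‖ ≤ C * Real.exp (ε * ‖ζ‖)) (hτ : 0 < τ)
    {A : Set ℕ} (hA : 0 < lowerDensity A) {a : ℕ → ℂ} (ha : Set.InjOn a A)
    (hGa : ∀ k ∈ A, G (a k + τ) = 0) {κ : ℝ} (hκ : 0 < κ) (hpos : ∀ k ∈ A, 0 < (a k).re)
    (hsq : ∀ k ∈ A, κ * ‖a k‖ ^ 2 ≤ k * (a k).re)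
    (hinv : ∀ k ∈ A, κ * (k : ℝ)⁻¹ ≤ (a k).re / (1 + ‖a k‖) ^ 2) : G (1 + τ) = 0 := by
  classical
  obtain ⟨σ, hσ, c, hsum⟩ := exists_mul_log_sub_le_sum_inv_of_lowerDensity_pos hA
  set ε : ℝ := κ * σ / (4 * (1 + τ)) with hε
  have hετ : ε * (1 + τ) = κ * σ / 4 := by
    rw [hε]
    field_simp
  obtain ⟨C, hC⟩ := hGC ε (by positivity)
  have hC0 : 0 ≤ C := nonneg_of_mul_nonneg_left
    ((norm_nonneg _).trans (hC 1 (by simp))) (Real.exp_pos _)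
  set L : ℝ := κ * σ / 4 * (Real.log (2 / κ + 2 + τ) + 1) + κ * c / 2 with hL
  have hbound : ∀ᶠ N : ℕ in atTop,
      ‖G (1 + τ)‖ ≤ C * Real.exp (L - κ * σ / 4 * Real.log N) := by
    filter_upwards [hsum, eventually_ge_atTop 1] with N hN hN1
    have hmem : ∀ k ∈ (Finset.range (N + 1)).filter (fun k => k ∈ A), k ≤ N ∧ k ∈ A :=
      fun k hk => (Finset.mem_filter.1 hk).imp_left Finset.mem_range_succ_iff.1
    refine (norm_le_exp_sub_sum_inv_of_zeros hG (by positivity) hC hτ hN1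
      (fun k hk => (hmem k hk).1) (ha.mono fun k hk => (hmem k hk).2)
      (fun k hk => hGa k (hmem k hk).2) hκ (fun k hk => hpos k (hmem k hk).2)
      (fun k hk => hsq k (hmem k hk).2) fun k hk => hinv k (hmem k hk).2).trans ?_
    refine mul_le_mul_of_nonneg_left (Real.exp_le_exp.2 ?_) hC0
    rw [← mul_assoc, hετ, hL]
    linarith [mul_le_mul_of_nonneg_left hN hκ.le]
  have hlim : Tendsto (fun N : ℕ => C * Real.exp (L - κ * σ / 4 * Real.log N)) atTop
      (𝓝 (C * 0)) :=
    (Real.tendsto_exp_atBot.comp (tendsto_atBot_add_const_left _ _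
      (tendsto_neg_atTop_atBot.comp ((Real.tendsto_log_atTop.comp
        tendsto_natCast_atTop_atTop).const_mul_atTop (by positivity))))).const_mul C
  rw [mul_zero] at hlim
  exact norm_le_zero_iff.1 (ge_of_tendsto hlim hbound)

lemma apply_one_add_eq_zero_of_zeros_of_le (hG : DifferentiableOn ℂ G {ζ | 0 < ζ.re})
    (hGC : ∀ ε > (0 : ℝ), ∃ C : ℝ, ∀ ζ, 0 < ζ.re → ‖G ζ‖ ≤ C * Real.exp (ε * ‖ζ‖)) (hτ : 0 < τ)
    {A : Set ℕ} (hA : 0 < lowerDensity A) {a : ℕ → ℂ} (ha : Set.InjOn a A)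
    (hGa : ∀ k ∈ A, G (a k) = 0) {c₁ c₂ : ℝ} (hc₁ : 0 < c₁) (hc₂ : 0 < c₂)
    (hre : ∀ k ∈ A, c₁ * k ≤ (a k).re) (hnorm : ∀ k ∈ A, ‖a k‖ ≤ c₂ * k) : G (1 + τ) = 0 := by
  obtain ⟨M, hM⟩ := exists_nat_ge (max 1 (max (2 * τ / c₁) ((1 + τ) / c₂)))
  set κ : ℝ := c₁ / (8 * c₂ ^ 2) with hκ
  have hloc : ∀ k ∈ {k ∈ A | M ≤ k}, (1 : ℝ) ≤ k ∧ c₁ * k / 2 ≤ (a k - τ).re ∧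
      1 + ‖a k - τ‖ ≤ 2 * c₂ * k := by
    rintro k ⟨hk, hMk⟩
    have hMk' : (M : ℝ) ≤ k := by exact_mod_cast hMk
    obtain ⟨h1, h2, h3⟩ : (1 : ℝ) ≤ k ∧ 2 * τ / c₁ ≤ k ∧ (1 + τ) / c₂ ≤ k := by
      simpa only [max_le_iff] using hM.trans hMk'
    rw [div_le_iff₀ (by positivity)] at h2 h3
    have hnormτ : ‖a k - τ‖ ≤ ‖a k‖ + τ := by
      simpa [abs_of_pos hτ] using norm_sub_le (a k) τ
    refine ⟨h1, ?_, by linarith [hnorm k hk]⟩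
    rw [sub_re, ofReal_re]
    linarith [hre k hk]
  have hκk : ∀ k : ℝ, κ * (2 * c₂ * k) ^ 2 = k * (c₁ * k / 2) := fun k => by
    rw [hκ]
    field_simp
    ring
  have hA' : 0 < lowerDensity {k ∈ A | M ≤ k} :=
    lowerDensity_pos_of_forall_ge_mem hA fun k hk hMk => ⟨hk, hMk⟩
  refine apply_one_add_eq_zero_of_zeros hG hGC hτ hA' (a := fun k => a k - τ) (κ := κ)
    (fun k hk l hl hkl => ha hk.1 hl.1 (sub_left_injective hkl))
    (fun k hk => by rw [sub_add_cancel]; exact hGa k hk.1) (by positivity) ?_ ?_ ?_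
  all_goals
    intro k hk
    obtain ⟨h1, hrek, hnormk⟩ := hloc k hk
  · exact lt_of_lt_of_le (by positivity) hrek
  · calc κ * ‖a k - τ‖ ^ 2 ≤ κ * (2 * c₂ * k) ^ 2 := by gcongr; linarith
      _ = k * (c₁ * k / 2) := hκk k
      _ ≤ k * (a k - τ).re := by gcongr
  · rw [le_div_iff₀ (by positivity)]
    calc κ * (k : ℝ)⁻¹ * (1 + ‖a k - τ‖) ^ 2 ≤ κ * (k : ℝ)⁻¹ * (2 * c₂ * k) ^ 2 := by gcongr
      _ = (k : ℝ)⁻¹ * (k * (c₁ * k / 2)) := by rw [← hκk]; ring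
      _ = c₁ * k / 2 := inv_mul_cancel_left₀ (by positivity) _
      _ ≤ (a k - τ).re := hrek

theorem eqOn_zero_of_zeros_of_lowerDensity_pos (hG : DifferentiableOn ℂ G {ζ | 0 < ζ.re})
    (hGC : ∀ ε > (0 : ℝ), ∃ C : ℝ, ∀ ζ, 0 < ζ.re → ‖G ζ‖ ≤ C * Real.exp (ε * ‖ζ‖))
    {A : Set ℕ} (hA : 0 < lowerDensity A) {a : ℕ → ℂ} (ha : Set.InjOn a A)
    (hGa : ∀ k ∈ A, G (a k) = 0) {c₁ c₂ : ℝ} (hc₁ : 0 < c₁)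
    (hre : ∀ k ∈ A, c₁ * k ≤ (a k).re) (hnorm : ∀ k ∈ A, ‖a k‖ ≤ c₂ * k) :
    Set.EqOn G 0 {ζ | 0 < ζ.re} := by
  have hc₂ : 0 < c₂ := by
    obtain ⟨k, hkA, hk⟩ := (infinite_of_lowerDensity_pos hA).exists_gt 0
    have hk' : (0 : ℝ) < k := by exact_mod_cast hk
    refine pos_of_mul_pos_left ((mul_pos hc₁ hk').trans_le ?_) hk'.le
    exact (hre k hkA).trans ((re_le_norm _).trans (hnorm k hkA))
  have hreal : ∀ᶠ x : ℝ in 𝓝[≠] 2, G x = 0 := by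
    filter_upwards [nhdsWithin_le_nhds (lt_mem_nhds one_lt_two)] with x hx
    have := apply_one_add_eq_zero_of_zeros_of_le hG hGC (sub_pos.2 hx) hA ha hGa hc₁ hc₂ hre hnorm
    rwa [ofReal_sub, ofReal_one, add_sub_cancel] at this
  have hopen : IsOpen {ζ : ℂ | 0 < ζ.re} := isOpen_lt continuous_const continuous_re
  refine (hG.analyticOnNhd hopen).eqOn_zero_of_preconnected_of_frequently_eq_zero
    (convex_halfSpace_re_gt 0).isPreconnected (z₀ := 2) (by simp) ?_
  have hmap : Tendsto ((↑) : ℝ → ℂ) (𝓝[≠] 2) (𝓝[≠] 2) :=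
    tendsto_nhdsWithin_iff.2 ⟨(continuous_ofReal.tendsto' 2 2 (by simp)).mono_left
      nhdsWithin_le_nhds, eventually_mem_nhdsWithin.mono fun x hx h => hx (ofReal_injective h)⟩
  exact hmap.frequently hreal.frequently

end HalfPlane

lemma exists_mem_closedBall_eq_zero_of_norm_lt {F : ℂ → ℂ} {c : ℂ} {r m : ℝ} (hr : 0 < r)
    (hF : DiffContOnCl ℂ F (Metric.ball c r)) (hc : ‖F c‖ < m)
    (hm : ∀ z ∈ Metric.sphere c r, m ≤ ‖F z‖) : ∃ z ∈ Metric.closedBall c r, F z = 0 := by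
  by_contra! hne
  have hm0 : 0 < m := (norm_nonneg _).trans_lt hc
  have hinv := norm_le_of_forall_mem_frontier_norm_le (C := m⁻¹) Metric.isBounded_ball
    (hF.inv fun z hz => hne z (by rwa [closure_ball c hr.ne'] at hz))
    (fun z hz => by
      rw [frontier_ball c hr.ne'] at hz
      rw [Pi.inv_apply, norm_inv]
      exact inv_anti₀ hm0 (hm z hz))
    (subset_closure (Metric.mem_ball_self hr))
  rw [Pi.inv_apply, norm_inv] at hinv
  have hFc : 0 < ‖F c‖ := norm_pos_iff.2 (hne c (Metric.mem_closedBall_self hr.le))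
  exact hc.not_ge ((inv_le_inv₀ hFc hm0).1 hinv)

section Exp

variable {K : Set ℂ} {f g : ℂ → ℂ}

lemma isBounded_segment (v w : ℂ) : Bornology.IsBounded (segment ℝ v w) := by
  rw [← convexHull_pair]
  exact isBounded_convexHull.2 (Set.toFinite _).isBounded

lemma suppFn_segment (v w z : ℂ) :
    suppFn (segment ℝ v w) z = max (z * v).re (z * w).re := by
  refine IsGreatest.csSup_eq ⟨?_, ?_⟩
  · rcases max_choice (z * v).re (z * w).re with h | h <;> rw [h]
    · exact ⟨v, left_mem_segment ℝ v w, rfl⟩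
    · exact ⟨w, right_mem_segment ℝ v w, rfl⟩
  · rintro _ ⟨u, ⟨a, b, ha, hb, hab, rfl⟩, rfl⟩
    have hre : (z * (a • v + b • w)).re = a * (z * v).re + b * (z * w).re := by
      simp only [real_smul, mul_add, mul_left_comm z, add_re, re_ofReal_mul]
    exact hre.trans_le (Convex.combo_le_max _ _ ha hb hab)

lemma re_mul_le_suppFn (hK : Bornology.IsBounded K) {u : ℂ} (hu : u ∈ K) (z : ℂ) :
    (z * u).re ≤ suppFn K z := by
  obtain ⟨r, hr⟩ := hK.exists_norm_le
  refine le_csSup ⟨‖z‖ * r, ?_⟩ ⟨u, hu, rfl⟩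
  rintro _ ⟨u', hu', rfl⟩
  exact (re_le_norm _).trans ((norm_mul_le _ _).trans (by gcongr; exact hr u' hu'))

lemma suppFn_le_of_forall_re_le (hne : K.Nonempty) {z : ℂ} {c : ℝ}
    (h : ∀ u ∈ K, (z * u).re ≤ c) : suppFn K z ≤ c :=
  csSup_le (hne.image _) (by rintro _ ⟨u, hu, rfl⟩; exact h u hu)

lemma suppFn_le_mul_norm (hne : K.Nonempty) {r : ℝ} (hr : ∀ u ∈ K, ‖u‖ ≤ r) (z : ℂ) :
    suppFn K z ≤ r * ‖z‖ :=
  suppFn_le_of_forall_re_le hne fun u hu => (re_le_norm _).trans <|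
    (norm_mul_le _ _).trans <| by rw [mul_comm r]; gcongr; exact hr u hu

lemma suppFn_add_le (hK : Bornology.IsBounded K) (hne : K.Nonempty) (z c : ℂ) :
    suppFn K (z + c) ≤ suppFn K z + suppFn K c :=
  suppFn_le_of_forall_re_le hne fun u hu => by
    rw [add_mul, add_re]
    exact add_le_add (re_mul_le_suppFn hK hu z) (re_mul_le_suppFn hK hu c)

lemma norm_mul_exp_neg_suppFn_le_iff {n : ℕ} {C : ℝ} {z : ℂ} :
    ‖f z‖ * Real.exp (-(suppFn K z) - ‖z‖ / n) ≤ C ↔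
      ‖f z‖ ≤ C * Real.exp (suppFn K z + ‖z‖ / n) := by
  rw [← neg_add', Real.exp_neg, mul_inv_le_iff₀ (Real.exp_pos _)]

lemma MemExp.exists_norm_le (hf : MemExp K f) {n : ℕ} (hn : 0 < n) :
    ∃ C ≥ (0 : ℝ), ∀ z, ‖f z‖ ≤ C * Real.exp (suppFn K z + ‖z‖ / n) := by
  obtain ⟨C, hC⟩ := hf.2 n hn
  exact ⟨C, (mul_nonneg (norm_nonneg _) (Real.exp_nonneg _)).trans (hC ⟨0, rfl⟩),
    fun z => norm_mul_exp_neg_suppFn_le_iff.1 (hC ⟨z, rfl⟩)⟩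

lemma memExp_of_norm_le (hf : Differentiable ℂ f)
    (h : ∀ n : ℕ, 0 < n → ∃ C : ℝ, ∀ z, ‖f z‖ ≤ C * Real.exp (suppFn K z + ‖z‖ / n)) :
    MemExp K f := by
  refine ⟨hf, fun n hn => ?_⟩
  obtain ⟨C, hC⟩ := h n hn
  exact ⟨C, by rintro _ ⟨z, rfl⟩; exact norm_mul_exp_neg_suppFn_le_iff.2 (hC z)⟩

lemma expNorm_le {n : ℕ} {C : ℝ} (h : ∀ z, ‖f z‖ ≤ C * Real.exp (suppFn K z + ‖z‖ / n)) :
    expNorm K n f ≤ C :=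
  csSup_le (Set.range_nonempty _)
    (by rintro _ ⟨z, rfl⟩; exact norm_mul_exp_neg_suppFn_le_iff.2 (h z))

lemma MemExp.norm_le_expNorm_mul (hf : MemExp K f) {n : ℕ} (hn : 0 < n) (z : ℂ) :
    ‖f z‖ ≤ expNorm K n f * Real.exp (suppFn K z + ‖z‖ / n) :=
  norm_mul_exp_neg_suppFn_le_iff.1 (le_csSup (hf.2 n hn) ⟨z, rfl⟩)

lemma MemExp.sub (hf : MemExp K f) (hg : MemExp K g) : MemExp K fun z => f z - g z := by
  refine memExp_of_norm_le (hf.1.sub hg.1) fun n hn => ?_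
  obtain ⟨C, -, hC⟩ := hf.exists_norm_le hn
  obtain ⟨D, -, hD⟩ := hg.exists_norm_le hn
  exact ⟨C + D, fun z => (norm_sub_le _ _).trans (by rw [add_mul]; exact add_le_add (hC z) (hD z))⟩

lemma MemExp.comp_add_const (hf : MemExp K f) (hK : Bornology.IsBounded K) (hne : K.Nonempty)
    (c : ℂ) : MemExp K fun z => f (z + c) := by
  refine memExp_of_norm_le (hf.1.comp (differentiable_id.add_const c)) fun n hn => ?_
  obtain ⟨C, hC0, hC⟩ := hf.exists_norm_le hn
  refine ⟨C * Real.exp (suppFn K c + ‖c‖ / n), fun z => (hC (z + c)).trans ?_⟩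
  rw [mul_assoc, ← Real.exp_add]
  have hsupp := suppFn_add_le hK hne z c
  have hnorm : ‖z + c‖ / n ≤ ‖z‖ / n + ‖c‖ / n := by
    rw [← add_div]
    gcongr
    exact norm_add_le z c
  exact mul_le_mul_of_nonneg_left (Real.exp_le_exp.2 (by linarith)) hC0

lemma memExp_exp (hK : Bornology.IsBounded K) {u : ℂ} (hu : u ∈ K) :
    MemExp K fun z => exp (z * u) := by
  refine memExp_of_norm_le (by fun_prop) fun n _ => ⟨1, fun z => ?_⟩
  rw [norm_exp, one_mul]
  gcongr
  exact (re_mul_le_suppFn hK hu z).trans (le_add_of_nonneg_right (by positivity))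

lemma memExp_mul_exp (hK : Bornology.IsBounded K) {u : ℂ} (hu : u ∈ K) :
    MemExp K fun z => z * exp (z * u) := by
  refine memExp_of_norm_le (by fun_prop) fun n hn => ⟨n, fun z => ?_⟩
  have hz : ‖z‖ ≤ n * Real.exp (‖z‖ / n) := by
    rw [← div_le_iff₀' (by positivity)]
    linarith [Real.add_one_le_exp (‖z‖ / n)]
  rw [norm_mul, norm_exp, add_comm, Real.exp_add, ← mul_assoc]
  gcongr
  exact re_mul_le_suppFn hK hu z

lemma memExp_zero : MemExp K fun _ => 0 :=
  memExp_of_norm_le (differentiable_const 0) fun _ _ => ⟨0, by simp⟩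

lemma FHCExp.lowerDensity_norm_sub_le_pos (hf : FHCExp K f) (hK : Bornology.IsBounded K)
    (hne : K.Nonempty) (hg : MemExp K g) {n : ℕ} (hn : 0 < n) {ε : ℝ} (hε : 0 < ε) :
    0 < lowerDensity
      {k : ℕ | ∀ z, ‖f (z + k) - g z‖ ≤ ε * Real.exp (suppFn K z + ‖z‖ / n)} :=
  lowerDensity_pos_of_forall_ge_mem (M := 0) (hf.2 g hg n hn ε hε) fun k hk _ z =>
    (((hf.1.comp_add_const hK hne k).sub hg).norm_le_expNorm_mul hn z).trans (by
      gcongr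
      exact hk.le)

lemma suppFn_zero (hne : K.Nonempty) : suppFn K 0 = 0 := by
  simp [suppFn, hne.image_const]

lemma FHCExp.exists_ge_half_le_norm (hf : FHCExp K f) (hK : Bornology.IsBounded K)
    (hne : K.Nonempty) (M : ℕ) : ∃ k ≥ M, 1 / 2 ≤ ‖f k‖ := by
  obtain ⟨u, hu⟩ := hne
  obtain ⟨k, hk, hMk⟩ := (infinite_of_lowerDensity_pos (hf.lowerDensity_norm_sub_le_pos hK ⟨u, hu⟩
    (memExp_exp hK hu) one_pos one_half_pos)).exists_gt M
  have h0 := hk 0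
  simp only [zero_add, zero_mul, exp_zero, suppFn_zero ⟨u, hu⟩, norm_zero, zero_div,
    Real.exp_zero, mul_one] at h0
  have h1 := norm_sub_norm_le 1 (f k)
  rw [norm_sub_rev, norm_one] at h1
  exact ⟨k, hMk.le, by linarith⟩

end Exp

section Necessity

variable {K : Set ℂ} {f : ℂ → ℂ}

lemma suppFn_natCast_mul_le (hK : Bornology.IsBounded K) (hne : K.Nonempty) (k : ℕ) (z : ℂ) :
    suppFn K (k * z) ≤ k * suppFn K z :=
  suppFn_le_of_forall_re_le hne fun u hu => by
    rw [mul_assoc, ← ofReal_natCast, re_ofReal_mul]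
    exact mul_le_mul_of_nonneg_left (re_mul_le_suppFn hK hu z) k.cast_nonneg

lemma exists_tendsto_const_mul_exp_natCast_mul_add_div {s : ℝ} (hs : s < 0) :
    ∃ n : ℕ, 0 < n ∧ ∀ C : ℝ,
      Tendsto (fun k : ℕ => C * Real.exp (k * s + k / n)) atTop (𝓝 0) := by
  obtain ⟨n, hn⟩ := exists_nat_one_div_lt (neg_pos.2 hs)
  refine ⟨n + 1, n.succ_pos, fun C => ?_⟩
  have hexp : Tendsto (fun k : ℕ => (k : ℝ) * (s + 1 / (n + 1))) atTop atBot :=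
    tendsto_natCast_atTop_atTop.atTop_mul_const_of_neg (by linarith)
  have hlim := (Real.tendsto_exp_atBot.comp hexp).const_mul C
  rw [mul_zero] at hlim
  refine hlim.congr fun k => ?_
  rw [Function.comp_apply, Nat.cast_succ, mul_add, mul_one_div]

lemma FHCExp.suppFn_one_nonneg (hf : FHCExp K f) (hK : Bornology.IsBounded K)
    (hne : K.Nonempty) : 0 ≤ suppFn K 1 := by
  by_contra! hs
  obtain ⟨n, hn, hlim⟩ := exists_tendsto_const_mul_exp_natCast_mul_add_div hs
  obtain ⟨C, hC0, hC⟩ := hf.1.exists_norm_le hn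
  obtain ⟨M, hM⟩ := eventually_atTop.1 ((hlim C).eventually_lt_const one_half_pos)
  obtain ⟨k, hMk, hk⟩ := hf.exists_ge_half_le_norm hK hne M
  have hbound : ‖f k‖ ≤ C * Real.exp (k * suppFn K 1 + k / n) := by
    refine (hC k).trans ?_
    rw [norm_natCast]
    gcongr
    simpa using suppFn_natCast_mul_le hK hne k 1
  exact (hk.trans hbound).not_gt (hM k hMk)

lemma FHCExp.suppFn_neg_one_nonneg (hf : FHCExp K f) (hK : Bornology.IsBounded K)
    (hne : K.Nonempty) : 0 ≤ suppFn K (-1) := by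
  by_contra! hs
  obtain ⟨n, hn, hlim⟩ := exists_tendsto_const_mul_exp_natCast_mul_add_div hs
  have hzero : ∀ z, f z = 0 := by
    intro z
    by_contra hz
    obtain ⟨M, hM⟩ := eventually_atTop.1
      ((hlim (Real.exp (suppFn K z + ‖z‖ / n))).eventually_lt_const (norm_pos_iff.2 hz))
    obtain ⟨k, hk, hMk⟩ := (infinite_of_lowerDensity_pos
      (hf.lowerDensity_norm_sub_le_pos hK hne memExp_zero hn one_pos)).exists_gt M
    have hbound := hk (z - k)
    rw [sub_add_cancel, sub_zero, one_mul] at hbound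
    refine (hbound.trans ?_).not_gt (hM k hMk.le)
    rw [← Real.exp_add, Real.exp_le_exp]
    have hsupp : suppFn K (z - k) ≤ suppFn K z + k * suppFn K (-1) := by
      rw [sub_eq_add_neg, ← mul_neg_one (k : ℂ)]
      exact (suppFn_add_le hK hne _ _).trans (by gcongr; exact suppFn_natCast_mul_le hK hne k _)
    have hnorm : ‖z - k‖ / n ≤ ‖z‖ / n + k / n := by
      rw [← add_div]
      gcongr
      exact (norm_sub_le z k).trans_eq (by rw [norm_natCast])
    linarith
  obtain ⟨k, -, hk⟩ := hf.exists_ge_half_le_norm hK hne 0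
  rw [hzero, norm_zero] at hk
  linarith

lemma FHCExp.exists_lowerDensity_pos_forall_exists_zero (hf : FHCExp K f)
    (hK : Bornology.IsBounded K) {w : ℂ} (hw : w ∈ K) :
    ∃ A : Set ℕ, 0 < lowerDensity A ∧ ∀ k ∈ A, ∃ z : ℂ, ‖z - k‖ ≤ 1 / 4 ∧ f z = 0 := by
  obtain ⟨r, hr0, hr⟩ := hK.exists_pos_norm_le
  have hne : K.Nonempty := ⟨w, hw⟩
  set m : ℝ := 1 / 4 * Real.exp (-(r / 4)) with hm
  have hm0 : 0 < m := by positivity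
  set ε : ℝ := m / 4 * Real.exp (-((r + 1) / 4)) with hε
  refine ⟨_, hf.lowerDensity_norm_sub_le_pos hK hne (memExp_mul_exp hK hw) one_pos
    (show 0 < ε by positivity), fun k hk => ?_⟩
  have hclose : ∀ z, ‖z‖ ≤ 1 / 4 → ‖f (z + k) - z * exp (z * w)‖ ≤ m / 4 := by
    intro z hz
    refine (hk z).trans ?_
    rw [hε, mul_assoc, ← Real.exp_add]
    refine mul_le_of_le_one_right (by positivity) (Real.exp_le_one_iff.2 ?_)
    rw [Nat.cast_one, div_one]
    nlinarith [suppFn_le_mul_norm hne hr z]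
  have hcircle : ∀ z ∈ Metric.sphere (0 : ℂ) (1 / 4), m * (3 / 4) ≤ ‖f (z + k)‖ := by
    intro z hz
    rw [mem_sphere_zero_iff_norm] at hz
    have hmz : m ≤ ‖z * exp (z * w)‖ := by
      rw [norm_mul, norm_exp, hz, hm]
      gcongr
      have hzw := (abs_le.1 (abs_re_le_norm (z * w))).1
      rw [norm_mul, hz] at hzw
      linarith [hr w hw]
    have htri := norm_sub_norm_le (z * exp (z * w)) (f (z + k))
    rw [norm_sub_rev] at htri
    linarith [hclose z hz.le]
  have hdiff : Differentiable ℂ fun z => f (z + k) :=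
    hf.1.1.comp (differentiable_id.add_const _)
  have hcenter : ‖f (0 + k)‖ < m * (3 / 4) := by
    have h0 := hclose 0 (by norm_num)
    rw [zero_mul, sub_zero] at h0
    linarith
  obtain ⟨z, hz, hfz⟩ := exists_mem_closedBall_eq_zero_of_norm_lt (by norm_num) hdiff.diffContOnCl
    hcenter hcircle
  exact ⟨z + k, by simpa using hz, hfz⟩

lemma natCast_eq_of_norm_sub_lt_half {z : ℂ} {k l : ℕ} (hk : ‖z - k‖ < 1 / 2)
    (hl : ‖z - l‖ < 1 / 2) : k = l := by
  by_contra hne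
  have hint : (1 : ℝ) ≤ |((k : ℤ) - l : ℤ)| := by
    exact_mod_cast Int.one_le_abs (sub_ne_zero.2 (Nat.cast_injective.ne hne))
  have htri := norm_sub_le (z - l) (z - k)
  have hcast : ((k : ℂ) - l) = (((k : ℤ) - l : ℤ) : ℂ) := by push_cast; rfl
  rw [sub_sub_sub_cancel_left, hcast, norm_intCast] at htri
  push_cast at hint htri
  linarith

lemma eqOn_zero_of_zeros_near_mul_natCast {G : ℂ → ℂ}
    (hG : DifferentiableOn ℂ G {ζ | 0 < ζ.re})
    (hGC : ∀ ε > (0 : ℝ), ∃ C : ℝ, ∀ ζ : ℂ, 0 < ζ.re → ‖G ζ‖ ≤ C * Real.exp (ε * ‖ζ‖))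
    {A : Set ℕ} (hA : 0 < lowerDensity A) {u : ℂ} (hu : 0 < u.re)
    (hzero : ∀ k ∈ A, ∃ z : ℂ, ‖z - k‖ ≤ 1 / 4 ∧ G (u * z) = 0) :
    Set.EqOn G 0 {ζ | 0 < ζ.re} := by
  have hu0 : u ≠ 0 := by rintro rfl; simp at hu
  choose! a hak hGa using hzero
  obtain ⟨M, hM⟩ := exists_nat_ge (‖u‖ / (2 * u.re))
  rw [div_le_iff₀ (by positivity)] at hM
  set B : Set ℕ := {k ∈ A | max M 1 ≤ k}
  have hBpos : 0 < lowerDensity B :=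
    lowerDensity_pos_of_forall_ge_mem hA (M := max M 1) fun k hk hMk => ⟨hk, hMk⟩
  have hdist : ∀ k ∈ B, ‖u * a k - u * k‖ ≤ ‖u‖ / 4 := fun k hk => by
    rw [← mul_sub, norm_mul]
    linarith [mul_le_mul_of_nonneg_left (hak k hk.1) (norm_nonneg u)]
  have hinj : Set.InjOn (fun k => u * a k) B := by
    intro k hk l hl hkl
    have hkl' : a k = a l := mul_left_cancel₀ hu0 hkl
    exact natCast_eq_of_norm_sub_lt_half ((hak k hk.1).trans_lt (by norm_num))
      (hkl' ▸ (hak l hl.1).trans_lt (by norm_num))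
  refine eqOn_zero_of_zeros_of_lowerDensity_pos hG hGC hBpos hinj (fun k hk => hGa k hk.1)
    (half_pos hu) (c₂ := 2 * ‖u‖) (fun k hk => ?_) fun k hk => ?_
  · have hMk : (M : ℝ) ≤ k := by exact_mod_cast (le_max_left _ _).trans hk.2
    have hre := (abs_le.1 ((abs_re_le_norm _).trans (hdist k hk))).1
    rw [sub_re, ← ofReal_natCast, re_mul_ofReal] at hre
    nlinarith
  · have hk1 : (1 : ℝ) ≤ k := by exact_mod_cast (le_max_right _ _).trans hk.2
    have hnorm := (norm_sub_norm_le _ _).trans (hdist k hk)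
    rw [norm_mul u (k : ℂ), Complex.norm_natCast] at hnorm
    nlinarith [norm_nonneg u]

lemma not_fhcExp_of_suppFn_le_re_mul (hK : Bornology.IsBounded K) {w u : ℂ} (hw : w ∈ K)
    (hu : 0 < u.re) (hdom : ∀ z, 0 < (u * z).re → suppFn K z ≤ (z * w).re) : ¬ FHCExp K f := by
  intro hf
  have hu0 : u ≠ 0 := by rintro rfl; simp at hu
  set G : ℂ → ℂ := fun ζ => f (ζ / u) * exp (-(ζ / u * w)) with hG
  have hGu : ∀ z, G (u * z) = f z * exp (-(z * w)) := fun z => by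
    simp only [hG, mul_div_cancel_left₀ z hu0]
  have hGd : Differentiable ℂ G :=
    (hf.1.1.comp (differentiable_id.div_const u)).mul (by fun_prop)
  have hGC : ∀ ε > (0 : ℝ), ∃ C : ℝ, ∀ ζ : ℂ, 0 < ζ.re → ‖G ζ‖ ≤ C * Real.exp (ε * ‖ζ‖) := by
    intro ε hε
    obtain ⟨n, hn⟩ := exists_nat_gt (1 / (ε * ‖u‖))
    have hn0 : (0 : ℝ) < n := (by positivity : 0 < 1 / (ε * ‖u‖)).trans hn
    obtain ⟨C, hC0, hC⟩ := hf.1.exists_norm_le (Nat.cast_pos.1 hn0)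
    refine ⟨C, fun ζ hζ => ?_⟩
    obtain ⟨z, rfl⟩ : ∃ z, ζ = u * z := ⟨ζ / u, (mul_div_cancel₀ ζ hu0).symm⟩
    have hnε : ‖z‖ / n ≤ ε * ‖u * z‖ := by
      rw [div_lt_iff₀ (by positivity)] at hn
      rw [div_le_iff₀ hn0, norm_mul]
      nlinarith [norm_nonneg z]
    rw [hGu, norm_mul, norm_exp, neg_re]
    calc _ ≤ C * Real.exp (suppFn K z + ‖z‖ / n) * Real.exp (-(z * w).re) := by gcongr; exact hC z
      _ = C * Real.exp (suppFn K z + ‖z‖ / n - (z * w).re) := by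
        rw [mul_assoc, ← Real.exp_add, ← sub_eq_add_neg]
      _ ≤ _ := by gcongr; linarith [hdom z hζ]
  obtain ⟨A, hA, hzero⟩ := hf.exists_lowerDensity_pos_forall_exists_zero hK hw
  have hG0 : Set.EqOn G 0 {ζ | 0 < ζ.re} :=
    eqOn_zero_of_zeros_near_mul_natCast hGd.differentiableOn hGC hA hu fun k hk => by
      obtain ⟨z, hzk, hfz⟩ := hzero k hk
      exact ⟨z, hzk, by rw [hGu, hfz, zero_mul]⟩
  obtain ⟨k, hk1, hk⟩ := hf.exists_ge_half_le_norm hK ⟨w, hw⟩ 1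
  have hGk : G (u * k) = 0 := hG0 (show 0 < (u * k).re by
    rw [← ofReal_natCast, re_mul_ofReal]
    exact mul_pos hu (by exact_mod_cast hk1))
  rw [hGu, mul_eq_zero, or_iff_left (exp_ne_zero _)] at hGk
  rw [hGk, norm_zero] at hk
  linarith

lemma not_fhcExp_segment_of_re_lt {v w : ℂ} (h : v.re < w.re) : ¬ FHCExp (segment ℝ v w) f :=
  not_fhcExp_of_suppFn_le_re_mul (isBounded_segment v w) (right_mem_segment ℝ v w)
    (u := w - v) (by rwa [sub_re, sub_pos]) fun z hz => by
      rw [sub_mul, sub_re, sub_pos, mul_comm v, mul_comm w] at hz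
      rw [suppFn_segment, max_eq_right hz.le]

theorem FHCExp.ne_and_re_eq_zero_of_segment {v w : ℂ} (hf : FHCExp (segment ℝ v w) f) :
    v ≠ w ∧ v.re = 0 ∧ w.re = 0 := by
  have hK : Bornology.IsBounded (segment ℝ v w) := isBounded_segment v w
  have hw : w ∈ segment ℝ v w := right_mem_segment ℝ v w
  have hne : v ≠ w := by
    rintro rfl
    exact not_fhcExp_of_suppFn_le_re_mul hK hw (u := 1) (by simp)
      (fun z _ => by rw [suppFn_segment, max_self]) hf
  have hre : v.re = w.re := by
    by_contra hre
    rcases lt_or_gt_of_ne hre with h | h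
    · exact not_fhcExp_segment_of_re_lt h hf
    · exact not_fhcExp_segment_of_re_lt h (segment_symm ℝ v w ▸ hf)
  have h1 := hf.suppFn_one_nonneg hK ⟨w, hw⟩
  have h2 := hf.suppFn_neg_one_nonneg hK ⟨w, hw⟩
  rw [suppFn_segment, one_mul, one_mul, hre, max_self] at h1
  rw [suppFn_segment, neg_one_mul, neg_one_mul, neg_re, neg_re, hre, max_self] at h2
  exact ⟨hne, by linarith, by linarith⟩

end Necessity

section Sine

lemma norm_exp_mul_I_le (z : ℂ) : ‖exp (z * I)‖ ≤ Real.exp |z.im| := by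
  rw [norm_exp, mul_I_re, Real.exp_le_exp]
  exact neg_le_abs _

lemma norm_exp_neg_mul_I_le (z : ℂ) : ‖exp (-z * I)‖ ≤ Real.exp |z.im| := by
  simpa using norm_exp_mul_I_le (-z)

lemma norm_sin_le (z : ℂ) : ‖sin z‖ ≤ Real.exp |z.im| := by
  rw [sin, norm_div, norm_mul, norm_I, mul_one, Complex.norm_ofNat]
  linarith [norm_sub_le (exp (-z * I)) (exp (z * I)), norm_exp_mul_I_le z, norm_exp_neg_mul_I_le z]

lemma norm_cos_le (z : ℂ) : ‖cos z‖ ≤ Real.exp |z.im| := by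
  rw [cos, norm_div, Complex.norm_ofNat]
  linarith [norm_add_le (exp (z * I)) (exp (-z * I)), norm_exp_mul_I_le z, norm_exp_neg_mul_I_le z]

/-- The entire function `sin z / z`, with value `1` at the origin. -/
noncomputable def csinc : ℂ → ℂ := dslope sin 0

lemma differentiable_csinc : Differentiable ℂ csinc := by
  rw [← differentiableOn_univ]
  exact (differentiableOn_dslope univ_mem).2 differentiable_sin.differentiableOn

lemma mul_csinc (z : ℂ) : z * csinc z = sin z := by
  simpa [csinc] using sub_smul_dslope sin 0 z

lemma csinc_zero : csinc 0 = 1 := by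
  simp [csinc, dslope_same]

lemma norm_mul_norm_csinc_le (z : ℂ) : ‖z‖ * ‖csinc z‖ ≤ Real.exp |z.im| := by
  rw [← norm_mul, mul_csinc]
  exact norm_sin_le z

lemma norm_csinc_le (z : ℂ) : ‖csinc z‖ ≤ Real.exp |z.im| := by
  rcases eq_or_ne z 0 with rfl | hz
  · simp [csinc_zero]
  have hconv : Convex ℝ {x : ℂ | |x.im| ≤ |z.im|} := by
    simpa only [abs_le, Set.preimage, Set.mem_Icc, imLm_coe] using
      (convex_Icc (-|z.im|) |z.im|).linear_preimage imLm
  have hsin := hconv.norm_image_sub_le_of_norm_deriv_le (f := sin) (C := Real.exp |z.im|)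
    (fun x _ => differentiable_sin x)
    (fun x hx => by
      rw [Complex.deriv_sin]
      exact (norm_cos_le x).trans (Real.exp_le_exp.2 hx))
    (show (0 : ℂ) ∈ {x : ℂ | |x.im| ≤ |z.im|} by simp) (show z ∈ {x : ℂ | |x.im| ≤ |z.im|} by simp)
  rw [sin_zero, sub_zero, sub_zero, ← mul_csinc, norm_mul, mul_comm] at hsin
  exact le_of_mul_le_mul_right hsin (norm_pos_iff.2 hz)

lemma norm_sin_sq (z : ℂ) : ‖sin z‖ ^ 2 = Real.cosh z.im ^ 2 - Real.cos z.re ^ 2 := by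
  have hsin : sin z = ((Real.sin z.re * Real.cosh z.im : ℝ) : ℂ) +
      ((Real.cos z.re * Real.sinh z.im : ℝ) : ℂ) * I := by
    rw [sin_eq]
    push_cast
    ring
  rw [hsin, ← normSq_eq_norm_sq, normSq_add_mul_I, mul_pow, mul_pow, Real.sin_sq, Real.cosh_sq]
  ring

lemma cos_pi_mul_sq_le_half {N : ℕ} {x : ℝ} (h₁ : N + 1 / 4 ≤ |x|) (h₂ : |x| ≤ N + 1 / 2) :
    Real.cos (π * x) ^ 2 ≤ 1 / 2 := by
  set t : ℝ := 2 * π * (N + 1 / 2 - |x|) with ht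
  have hcos : Real.cos (2 * (π * x)) = -Real.cos t := by
    rw [← Real.cos_abs, abs_mul, abs_mul, abs_of_pos Real.pi_pos, abs_two,
      show 2 * (π * |x|) = π - t + N * (2 * π) by rw [ht]; ring, Real.cos_add_nat_mul_two_pi,
      Real.cos_pi_sub]
  have ht0 : 0 ≤ t := mul_nonneg Real.two_pi_pos.le (by linarith)
  have ht1 : t ≤ π / 2 := by nlinarith [Real.pi_pos]
  have hnonneg : 0 ≤ Real.cos t := Real.cos_nonneg_of_neg_pi_div_two_le_of_le (by linarith) ht1
  rw [Real.cos_sq, hcos]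
  linarith

lemma one_add_sq_le_cosh_sq (x : ℝ) : 1 + x ^ 2 ≤ Real.cosh x ^ 2 := by
  rw [Real.cosh_sq, add_comm, add_le_add_iff_right, sq_le_sq, Real.abs_sinh]
  exact Real.self_le_sinh_iff.2 (abs_nonneg x)

lemma exp_abs_le_two_mul_cosh (x : ℝ) : Real.exp |x| ≤ 2 * Real.cosh x := by
  rw [← Real.cosh_abs, Real.cosh_eq]
  linarith [Real.exp_pos (-|x|)]

lemma exp_pi_mul_abs_im_le_of_norm_eq {N : ℕ} {ζ : ℂ} (h : ‖ζ‖ = N + 1 / 2) :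
    Real.exp (π * |ζ.im|) ≤ 3 * ‖sin (π * ζ)‖ := by
  have hcos : Real.cos (π * ζ.re) ^ 2 ≤ 1 / 2 * Real.cosh (π * ζ.im) ^ 2 := by
    rcases le_total |ζ.re| (N + 1 / 4) with hx | hx
    · have hy : 1 / 8 ≤ ζ.im ^ 2 := by
        have hsq : ζ.re ^ 2 + ζ.im ^ 2 = (N + 1 / 2 : ℝ) ^ 2 := by
          rw [← h, ← normSq_eq_norm_sq, normSq_apply, sq, sq]
        have hx' : ζ.re ^ 2 ≤ (N + 1 / 4 : ℝ) ^ 2 := by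
          rw [← sq_abs]
          gcongr
        nlinarith [N.cast_nonneg (α := ℝ)]
      have hcosh := one_add_sq_le_cosh_sq (π * ζ.im)
      rw [mul_pow] at hcosh
      nlinarith [Real.cos_sq_le_one (π * ζ.re), Real.pi_gt_three]
    · have hhalf := cos_pi_mul_sq_le_half hx (h ▸ abs_re_le_norm ζ)
      linarith [Real.one_le_cosh (π * ζ.im), one_le_pow₀ (Real.one_le_cosh (π * ζ.im)) (n := 2)]
  have hexp := exp_abs_le_two_mul_cosh (π * ζ.im)
  rw [abs_mul, abs_of_pos Real.pi_pos] at hexp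
  have hnorm := norm_sin_sq (π * ζ)
  rw [re_ofReal_mul, im_ofReal_mul] at hnorm
  refine le_of_sq_le_sq ?_ (by positivity)
  calc _ ≤ (2 * Real.cosh (π * ζ.im)) ^ 2 := by gcongr
    _ ≤ _ := by nlinarith

lemma sin_pi_mul_sub_intCast (z : ℂ) (k : ℤ) :
    sin (π * (z - k)) = cos (π * k) * sin (π * z) := by
  rw [mul_sub, sin_sub, mul_comm (π : ℂ) k, sin_int_mul_pi]
  ring

lemma sin_pi_mul_eq_zero_iff {z : ℂ} : sin (π * z) = 0 ↔ ∃ k : ℤ, z = k := by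
  have hπ : (π : ℂ) ≠ 0 := ofReal_ne_zero.2 Real.pi_ne_zero
  simp only [sin_eq_zero_iff, mul_comm _ (π : ℂ), mul_right_inj' hπ]

lemma csinc_pi_mul_sub_intCast {z : ℂ} (hz : sin (π * z) ≠ 0) (k : ℤ) :
    csinc (π * (z - k)) = cos (π * k) * sin (π * z) / (π * (z - k)) := by
  have hk : z - k ≠ 0 := fun h => hz (sin_pi_mul_eq_zero_iff.2 ⟨k, sub_eq_zero.1 h⟩)
  have hπ : (π : ℂ) ≠ 0 := ofReal_ne_zero.2 Real.pi_ne_zero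
  rw [eq_div_iff (mul_ne_zero hπ hk), ← sin_pi_mul_sub_intCast, mul_comm, mul_csinc]

lemma csinc_pi_mul_sub_of_ne {m k : ℤ} (h : m ≠ k) : csinc (π * (m - k)) = 0 := by
  have hne : (π : ℂ) * (m - k) ≠ 0 :=
    mul_ne_zero (ofReal_ne_zero.2 Real.pi_ne_zero) (sub_ne_zero.2 (Int.cast_injective.ne h))
  have hsin := mul_csinc (π * (m - k))
  rw [sin_pi_mul_eq_zero_iff.2 ⟨m - k, by push_cast; rfl⟩] at hsin
  exact (mul_eq_zero.1 hsin).resolve_left hne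

lemma norm_csinc_pi_mul_sub_intCast_le (z : ℂ) (k : ℤ) :
    ‖csinc (π * (z - k))‖ ≤ Real.exp (π * |z.im|) := by
  have h := norm_csinc_le (π * (z - k))
  rwa [im_ofReal_mul, abs_mul, abs_of_pos Real.pi_pos, sub_im, intCast_im, sub_zero] at h

end Sine

section CardinalSeries

lemma exists_eq_mul_of_zeros_simple {H S : ℂ → ℂ} {U : Set ℂ} (hU : IsOpen U)
    (hH : DifferentiableOn ℂ H U) (hS : DifferentiableOn ℂ S U)
    (hzero : ∀ a ∈ U, S a = 0 → deriv S a ≠ 0 ∧ H a = 0) :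
    ∃ E : ℂ → ℂ, DifferentiableOn ℂ E U ∧ ∀ z ∈ U, H z = S z * E z := by
  classical
  refine ⟨fun z => if S z = 0 then deriv H z / deriv S z else H z / S z, fun a ha => ?_,
    fun z hz => ?_⟩
  · have hUa : U ∈ 𝓝 a := hU.mem_nhds ha
    refine DifferentiableAt.differentiableWithinAt ?_
    by_cases hSa : S a = 0
    · obtain ⟨hderiv, hHa⟩ := hzero a ha hSa
      have hHd := ((differentiableOn_dslope hUa).2 hH).differentiableAt hUa
      have hSd := ((differentiableOn_dslope hUa).2 hS).differentiableAt hUa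
      have hSda : dslope S a a ≠ 0 := by rwa [dslope_same]
      refine (hHd.div hSd hSda).congr_of_eventuallyEq ?_
      filter_upwards [hSd.continuousAt.eventually_ne hSda] with z hz
      rw [Pi.div_apply]
      rcases eq_or_ne z a with rfl | hza
      · rw [if_pos hSa, dslope_same, dslope_same]
      · have hza' : z - a ≠ 0 := sub_ne_zero.2 hza
        have hHz := sub_smul_dslope H a z
        have hSz := sub_smul_dslope S a z
        rw [hHa, sub_zero, smul_eq_mul] at hHz
        rw [hSa, sub_zero, smul_eq_mul] at hSz
        rw [← hHz, ← hSz, if_neg (mul_ne_zero hza' hz), mul_div_mul_left _ _ hza']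
    · refine ((hH.differentiableAt hUa).div (hS.differentiableAt hUa) hSa).congr_of_eventuallyEq ?_
      filter_upwards [(hS.differentiableAt hUa).continuousAt.eventually_ne hSa] with z hz
      rw [if_neg hz, Pi.div_apply]
  · beta_reduce
    split_ifs with hSz
    · rw [hSz, zero_mul, (hzero z hz hSz).2]
    · rw [mul_div_cancel₀ _ hSz]

lemma sub_ne_zero_of_mem_sphere_of_mem_ball {c a ζ : ℂ} {R : ℝ} (ha : a ∈ Metric.ball c R)
    (hζ : ζ ∈ Metric.sphere c R) : ζ - a ≠ 0 := by
  rintro h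
  rw [sub_eq_zero.1 h] at hζ
  exact (Metric.mem_ball.1 ha).ne hζ

lemma continuousOn_sub_inv_of_mem_ball {c a : ℂ} {R : ℝ} (ha : a ∈ Metric.ball c R) :
    ContinuousOn (fun ζ => (ζ - a)⁻¹) (Metric.sphere c R) :=
  (continuousOn_id.sub continuousOn_const).inv₀ fun _ hζ =>
    sub_ne_zero_of_mem_sphere_of_mem_ball ha hζ

lemma circleIntegral_sub_inv_mul_sub_inv {c a z : ℂ} {R : ℝ} (ha : a ∈ Metric.ball c R)
    (hz : z ∈ Metric.ball c R) : (∮ ζ in C(c, R), (ζ - z)⁻¹ * (ζ - a)⁻¹) = 0 := by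
  have hR : 0 ≤ R := (Metric.pos_of_mem_ball ha).le
  rcases eq_or_ne z a with rfl | hza
  · rw [← circleIntegral.integral_sub_zpow_of_ne (n := -2) (by decide) c z R]
    refine circleIntegral.integral_congr hR fun ζ _ => ?_
    rw [zpow_neg, ← mul_inv, ← sq, zpow_ofNat]
  · have hpartial : (∮ ζ in C(c, R), (ζ - z)⁻¹ * (ζ - a)⁻¹) =
        ∮ ζ in C(c, R), (z - a)⁻¹ * ((ζ - z)⁻¹ - (ζ - a)⁻¹) := by
      refine circleIntegral.integral_congr hR fun ζ hζ => ?_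
      have h1 := sub_ne_zero_of_mem_sphere_of_mem_ball ha hζ
      have h2 := sub_ne_zero_of_mem_sphere_of_mem_ball hz hζ
      have h3 : z - a ≠ 0 := sub_ne_zero.2 hza
      field_simp
      ring
    rw [hpartial, circleIntegral.integral_const_mul,
      circleIntegral.integral_sub ((continuousOn_sub_inv_of_mem_ball hz).circleIntegrable hR)
        ((continuousOn_sub_inv_of_mem_ball ha).circleIntegrable hR),
      circleIntegral.integral_sub_inv_of_mem_ball hz,
      circleIntegral.integral_sub_inv_of_mem_ball ha, sub_self, mul_zero]

/-- The cardinal series of `F` truncated to the nodes `-N, …, N`: it interpolates `F` there. -/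
noncomputable def cardSum (F : ℂ → ℂ) (N : ℕ) (z : ℂ) : ℂ :=
  ∑ k ∈ Finset.Icc (-(N : ℤ)) N, F k * csinc (π * (z - k))

variable {F : ℂ → ℂ} {N : ℕ}

lemma differentiable_cardSum (F : ℂ → ℂ) (N : ℕ) : Differentiable ℂ (cardSum F N) :=
  Differentiable.fun_sum fun k _ =>
    (differentiable_csinc.comp (by fun_prop : Differentiable ℂ fun z : ℂ => π * (z - k))).const_mul
      (F k)

lemma cardSum_intCast {m : ℤ} (hm : m ∈ Finset.Icc (-(N : ℤ)) N) : cardSum F N m = F m := by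
  rw [cardSum, Finset.sum_eq_single_of_mem m hm fun k _ hk => by
    rw [csinc_pi_mul_sub_of_ne hk.symm, mul_zero]]
  rw [sub_self, mul_zero, csinc_zero, mul_one]

lemma cardSum_div_sin {z : ℂ} (hz : sin (π * z) ≠ 0) : cardSum F N z / sin (π * z) =
    ∑ k ∈ Finset.Icc (-(N : ℤ)) N, F k * cos (π * k) / π * (z - k)⁻¹ := by
  rw [cardSum, Finset.sum_div]
  refine Finset.sum_congr rfl fun k _ => ?_
  rw [csinc_pi_mul_sub_intCast hz, mul_comm (cos _), mul_div_assoc (sin _), mul_left_comm,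
    mul_div_cancel_left₀ _ hz, ← div_div, div_eq_mul_inv _ (z - k : ℂ)]
  ring

lemma norm_cardSum_le {M : ℝ} (hF : ∀ k ∈ Finset.Icc (-(N : ℤ)) N, ‖F k‖ ≤ M) (z : ℂ) :
    ‖cardSum F N z‖ ≤ (2 * N + 1) * M * Real.exp (π * |z.im|) := by
  have hcard : ((Finset.Icc (-(N : ℤ)) N).card : ℝ) = 2 * N + 1 := by
    rw [Int.card_Icc, show ((N : ℤ) + 1 - -(N : ℤ)).toNat = 2 * N + 1 by omega]
    push_cast
    rfl
  rw [← hcard, mul_assoc, ← nsmul_eq_mul]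
  refine (norm_sum_le _ _).trans (Finset.sum_le_card_nsmul _ _ _ fun k hk => ?_)
  rw [norm_mul]
  exact mul_le_mul (hF k hk) (norm_csinc_pi_mul_sub_intCast_le z k) (norm_nonneg _)
    ((norm_nonneg _).trans (hF k hk))

lemma mem_Icc_of_norm_intCast_lt {k : ℤ} (hk : ‖(k : ℂ)‖ < N + 1) :
    k ∈ Finset.Icc (-(N : ℤ)) N := by
  rw [norm_intCast] at hk
  have hk' : |k| < (N : ℤ) + 1 := by exact_mod_cast hk
  exact Finset.mem_Icc.2 (abs_le.1 (Int.lt_add_one_iff.1 hk'))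

lemma norm_intCast_le_of_mem_Icc {k : ℤ} (hk : k ∈ Finset.Icc (-(N : ℤ)) N) : ‖(k : ℂ)‖ ≤ N := by
  rw [norm_intCast]
  exact_mod_cast abs_le.2 (Finset.mem_Icc.1 hk)

lemma deriv_sin_pi_mul_ne_zero {a : ℂ} (ha : sin (π * a) = 0) :
    deriv (fun z : ℂ => sin (π * z)) a ≠ 0 := by
  have hderiv : HasDerivAt (fun z : ℂ => sin (π * z)) (cos (π * a) * (π * 1)) a :=
    ((hasDerivAt_id a).const_mul (π : ℂ)).csin
  rw [hderiv.deriv, mul_one]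
  refine mul_ne_zero (fun hcos => ?_) (ofReal_ne_zero.2 Real.pi_ne_zero)
  simpa [ha, hcos] using sin_sq_add_cos_sq (π * a)

lemma exists_sub_cardSum_eq_sin_mul (hF : Differentiable ℂ F) :
    ∃ E : ℂ → ℂ, DifferentiableOn ℂ E (Metric.ball 0 (N + 1)) ∧
      ∀ z ∈ Metric.ball (0 : ℂ) (N + 1), F z - cardSum F N z = sin (π * z) * E z := by
  refine exists_eq_mul_of_zeros_simple Metric.isOpen_ball
    (hF.sub (differentiable_cardSum F N)).differentiableOn
    (by fun_prop : Differentiable ℂ fun z : ℂ => sin (π * z)).differentiableOn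
    fun a ha hsin => ⟨deriv_sin_pi_mul_ne_zero hsin, ?_⟩
  obtain ⟨k, rfl⟩ := sin_pi_mul_eq_zero_iff.1 hsin
  rw [mem_ball_zero_iff] at ha
  rw [cardSum_intCast (mem_Icc_of_norm_intCast_lt ha), sub_self]

lemma sin_pi_mul_ne_zero_of_mem_sphere {R : ℝ} (h₁ : N < R) (h₂ : R < N + 1) {ζ : ℂ}
    (hζ : ζ ∈ Metric.sphere (0 : ℂ) R) : sin (π * ζ) ≠ 0 := by
  rintro hsin
  obtain ⟨k, rfl⟩ := sin_pi_mul_eq_zero_iff.1 hsin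
  rw [mem_sphere_zero_iff_norm] at hζ
  rw [← hζ] at h₁ h₂
  exact (norm_intCast_le_of_mem_Icc (mem_Icc_of_norm_intCast_lt h₂)).not_gt h₁

lemma circleIntegral_sub_inv_mul_cardSum_div_sin {R : ℝ} (h₁ : N < R) (h₂ : R < N + 1) {z : ℂ}
    (hz : z ∈ Metric.ball 0 R) :
    (∮ ζ in C(0, R), (ζ - z)⁻¹ * (cardSum F N ζ / sin (π * ζ))) = 0 := by
  have hR : 0 ≤ R := (Metric.pos_of_mem_ball hz).le
  have hk : ∀ k ∈ Finset.Icc (-(N : ℤ)) N, (k : ℂ) ∈ Metric.ball (0 : ℂ) R := fun k hk =>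
    mem_ball_zero_iff.2 ((norm_intCast_le_of_mem_Icc hk).trans_lt h₁)
  have hpoles : (∮ ζ in C(0, R), (ζ - z)⁻¹ * (cardSum F N ζ / sin (π * ζ))) =
      ∮ ζ in C(0, R), ∑ k ∈ Finset.Icc (-(N : ℤ)) N,
        F k * cos (π * k) / π * ((ζ - z)⁻¹ * (ζ - k)⁻¹) := by
    refine circleIntegral.integral_congr hR fun ζ hζ => ?_
    rw [cardSum_div_sin (sin_pi_mul_ne_zero_of_mem_sphere h₁ h₂ hζ), Finset.mul_sum]
    exact Finset.sum_congr rfl fun k _ => mul_left_comm _ _ _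
  have hint : ∀ k ∈ Finset.Icc (-(N : ℤ)) N,
      CircleIntegrable (fun ζ => F k * cos (π * k) / π * ((ζ - z)⁻¹ * (ζ - k)⁻¹)) 0 R :=
    fun k hkN => (continuousOn_const.mul ((continuousOn_sub_inv_of_mem_ball hz).mul
      (continuousOn_sub_inv_of_mem_ball (hk k hkN)))).circleIntegrable hR
  rw [hpoles, circleIntegral.integral_fun_sum hint]
  refine Finset.sum_eq_zero fun k hkN => ?_
  rw [circleIntegral.integral_const_mul, circleIntegral_sub_inv_mul_sub_inv (hk k hkN) hz, mul_zero]

theorem sub_cardSum_eq_sin_mul_circleIntegral (hF : Differentiable ℂ F) {R : ℝ} (h₁ : N < R)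
    (h₂ : R < N + 1) {z : ℂ} (hz : z ∈ Metric.ball 0 R) :
    F z - cardSum F N z = sin (π * z) *
      ((2 * π * I : ℂ)⁻¹ * ∮ ζ in C(0, R), (ζ - z)⁻¹ * (F ζ / sin (π * ζ))) := by
  have hR : 0 ≤ R := (Metric.pos_of_mem_ball hz).le
  have hsub : Metric.closedBall (0 : ℂ) R ⊆ Metric.ball 0 (N + 1) :=
    Metric.closedBall_subset_ball h₂
  have hint : ∀ H : ℂ → ℂ, Continuous H →
      CircleIntegrable (fun ζ => (ζ - z)⁻¹ * (H ζ / sin (π * ζ))) 0 R := fun H hH =>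
    ((continuousOn_sub_inv_of_mem_ball hz).mul (hH.continuousOn.div (by fun_prop) fun ζ hζ =>
      sin_pi_mul_ne_zero_of_mem_sphere h₁ h₂ hζ)).circleIntegrable hR
  obtain ⟨E, hE, hFE⟩ := exists_sub_cardSum_eq_sin_mul (N := N) hF
  have hquot : ∀ ζ ∈ Metric.sphere (0 : ℂ) R, (ζ - z)⁻¹ • E ζ =
      (ζ - z)⁻¹ * (F ζ / sin (π * ζ)) - (ζ - z)⁻¹ * (cardSum F N ζ / sin (π * ζ)) := fun ζ hζ => by
    rw [smul_eq_mul, ← mul_sub, ← sub_div, hFE ζ (hsub (Metric.sphere_subset_closedBall hζ)),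
      mul_div_cancel_left₀ _ (sin_pi_mul_ne_zero_of_mem_sphere h₁ h₂ hζ)]
  have hcauchy := (hE.mono hsub).circleIntegral_sub_inv_smul hz
  rw [circleIntegral.integral_congr hR hquot,
    circleIntegral.integral_sub (hint F hF.continuous)
      (hint _ (differentiable_cardSum F N).continuous),
    circleIntegral_sub_inv_mul_cardSum_div_sin h₁ h₂ hz, sub_zero] at hcauchy
  rw [hFE z (hsub (Metric.ball_subset_closedBall hz)), hcauchy, smul_eq_mul,
    inv_mul_cancel_left₀ two_pi_I_ne_zero]

lemma norm_sub_cardSum_le (hF : Differentiable ℂ F) {B : ℝ}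
    (hB : ∀ ζ : ℂ, ‖ζ‖ = N + 1 / 2 → ‖F ζ‖ ≤ B * ‖sin (π * ζ)‖) {z : ℂ}
    (hz : ‖z‖ ≤ (N + 1 / 2) / 2) :
    ‖F z - cardSum F N z‖ ≤ 2 * B * Real.exp (π * |z.im|) := by
  set R : ℝ := N + 1 / 2 with hR
  have hR0 : 0 < R := by positivity
  have hzR : z ∈ Metric.ball (0 : ℂ) R := mem_ball_zero_iff.2 (hz.trans_lt (half_lt_self hR0))
  have hint : ‖(2 * π * I : ℂ)⁻¹ • ∮ ζ in C(0, R), (ζ - z)⁻¹ * (F ζ / sin (π * ζ))‖ ≤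
      R * (2 / R * B) := by
    refine circleIntegral.norm_two_pi_i_inv_smul_integral_le_of_norm_le_const hR0.le fun ζ hζ => ?_
    have hsin : 0 < ‖sin (π * ζ)‖ := norm_pos_iff.2
      (sin_pi_mul_ne_zero_of_mem_sphere (N := N) (by linarith) (by linarith) hζ)
    rw [mem_sphere_zero_iff_norm] at hζ
    have hdist : R / 2 ≤ ‖ζ - z‖ := by linarith [norm_sub_norm_le ζ z]
    have hinv : ‖ζ - z‖⁻¹ ≤ 2 / R := by
      rw [← inv_div]
      exact inv_anti₀ (half_pos hR0) hdist
    have hFB : ‖F ζ‖ / ‖sin (π * ζ)‖ ≤ B := (div_le_iff₀ hsin).2 (hB ζ hζ)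
    rw [norm_mul, norm_inv, norm_div]
    gcongr
  rw [← mul_assoc, mul_div_cancel₀ _ hR0.ne', smul_eq_mul] at hint
  have hsinz := norm_sin_le (π * z)
  rw [im_ofReal_mul, abs_mul, abs_of_pos Real.pi_pos] at hsinz
  rw [sub_cardSum_eq_sin_mul_circleIntegral hF (by linarith) (by linarith) hzR, norm_mul, mul_comm]
  gcongr
  exact (norm_nonneg _).trans hint

end CardinalSeries

section ExpLimit

variable {K L : Set ℂ} {P Q : (ℂ → ℂ) → Prop} {f g : ℂ → ℂ}

lemma MemExp.exists_norm_le_of_pos (hf : MemExp K f) {ε : ℝ} (hε : 0 < ε) :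
    ∃ C ≥ (0 : ℝ), ∀ z, ‖f z‖ ≤ C * Real.exp (suppFn K z + ε * ‖z‖) := by
  obtain ⟨n, hn⟩ := exists_nat_one_div_lt hε
  obtain ⟨C, hC0, hC⟩ := hf.exists_norm_le n.succ_pos
  refine ⟨C, hC0, fun z => (hC z).trans ?_⟩
  rw [div_eq_mul_one_div, mul_comm ‖z‖, Nat.cast_succ]
  gcongr

lemma memExp_of_forall_pos (hf : Differentiable ℂ f)
    (h : ∀ ε > (0 : ℝ), ∃ C : ℝ, ∀ z, ‖f z‖ ≤ C * Real.exp (suppFn K z + ε * ‖z‖)) :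
    MemExp K f :=
  memExp_of_norm_le hf fun n hn => by
    simpa only [div_eq_inv_mul] using h (n : ℝ)⁻¹ (by positivity)

/-- `f` is a limit, in the topology of `Exp(K)`, of functions with the property `P`. The norms are
indexed by real `ε > 0` instead of `1 / n`, and bounds replace suprema. -/
def IsExpLimit (K : Set ℂ) (P : (ℂ → ℂ) → Prop) (f : ℂ → ℂ) : Prop :=
  ∀ ε > (0 : ℝ), ∀ δ > (0 : ℝ),
    ∃ g, P g ∧ ∀ z, ‖g z - f z‖ ≤ δ * Real.exp (suppFn K z + ε * ‖z‖)

lemma IsExpLimit.trans (hf : IsExpLimit K P f) (h : ∀ g, P g → IsExpLimit K Q g) :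
    IsExpLimit K Q f := fun ε hε δ hδ => by
  obtain ⟨g, hg, hgf⟩ := hf ε hε (δ / 2) (half_pos hδ)
  obtain ⟨q, hq, hqg⟩ := h g hg ε hε (δ / 2) (half_pos hδ)
  refine ⟨q, hq, fun z => (norm_sub_le_norm_sub_add_norm_sub _ (g z) _).trans ?_⟩
  linarith [hgf z, hqg z]

lemma IsExpLimit.mono (hf : IsExpLimit K P f) (h : ∀ z, suppFn K z ≤ suppFn L z) :
    IsExpLimit L P f := fun ε hε δ hδ => by
  obtain ⟨g, hg, hgf⟩ := hf ε hε δ hδ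
  refine ⟨g, hg, fun z => (hgf z).trans ?_⟩
  gcongr
  exact h z

lemma neg_mul_norm_le_suppFn (hK : Bornology.IsBounded K) {u : ℂ} (hu : u ∈ K) (z : ℂ) :
    -(‖z‖ * ‖u‖) ≤ suppFn K z := by
  rw [← norm_mul]
  exact (neg_le_of_abs_le (abs_re_le_norm _)).trans (re_mul_le_suppFn hK hu z)

lemma eventually_norm_sub_le_mul_exp {ι : Type*} {l : Filter ι} [l.NeBot] {F : ι → ℂ → ℂ}
    (hK : Bornology.IsBounded K) (hne : K.Nonempty) (hlim : TendstoLocallyUniformly F f l)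
    {C ε₁ ε₂ δ : ℝ} (hC : ∀ᶠ j in l, ∀ z, ‖F j z‖ ≤ C * Real.exp (suppFn K z + ε₁ * ‖z‖))
    (hε₁ : ε₁ < ε₂) (hε₂ : 0 ≤ ε₂) (hδ : 0 < δ) :
    ∀ᶠ j in l, ∀ z, ‖F j z - f z‖ ≤ δ * Real.exp (suppFn K z + ε₂ * ‖z‖) := by
  obtain ⟨u, hu⟩ := hne
  have hf : ∀ z, ‖f z‖ ≤ C * Real.exp (suppFn K z + ε₁ * ‖z‖) := fun z =>
    le_of_tendsto (hlim.tendstoLocallyUniformlyOn.tendsto_at (Set.mem_univ z)).norm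
      (hC.mono fun j hj => hj z)
  obtain ⟨r, hr⟩ : ∃ r : ℝ, 2 * C ≤ δ * Real.exp ((ε₂ - ε₁) * r) :=
    (((Real.tendsto_exp_atTop.comp (tendsto_id.const_mul_atTop (sub_pos.2 hε₁))).const_mul_atTop
      hδ).eventually_ge_atTop (2 * C)).exists
  have hunif := Metric.tendstoUniformlyOn_iff.1 (tendstoLocallyUniformly_iff_forall_isCompact.1
    hlim _ (isCompact_closedBall 0 r)) (δ * Real.exp (-(r * ‖u‖))) (by positivity)
  filter_upwards [hC, hunif] with j hj hunifj z
  rcases le_total ‖z‖ r with hz | hz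
  · rw [← dist_eq_norm, dist_comm]
    refine (hunifj z (mem_closedBall_zero_iff.2 hz)).le.trans ?_
    gcongr
    have hsupp := neg_mul_norm_le_suppFn hK hu z
    have hzr : ‖z‖ * ‖u‖ ≤ r * ‖u‖ := by gcongr
    linarith [mul_nonneg hε₂ (norm_nonneg z)]
  · calc ‖F j z - f z‖
        ≤ C * Real.exp (suppFn K z + ε₁ * ‖z‖) + C * Real.exp (suppFn K z + ε₁ * ‖z‖) :=
          (norm_sub_le _ _).trans (add_le_add (hj z) (hf z))
      _ = 2 * C * Real.exp (suppFn K z + ε₁ * ‖z‖) := by ring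
      _ ≤ δ * Real.exp ((ε₂ - ε₁) * ‖z‖) * Real.exp (suppFn K z + ε₁ * ‖z‖) := by
          refine mul_le_mul_of_nonneg_right (hr.trans ?_) (Real.exp_nonneg _)
          gcongr
      _ = δ * Real.exp (suppFn K z + ε₂ * ‖z‖) := by
          rw [mul_assoc, ← Real.exp_add]
          ring_nf

lemma isExpLimit_of_tendstoLocallyUniformly {ι : Type*} {l : Filter ι} [l.NeBot] {F : ι → ℂ → ℂ}
    (hK : Bornology.IsBounded K) (hne : K.Nonempty) (hlim : TendstoLocallyUniformly F f l)
    (hbound : ∀ ε > (0 : ℝ), ∃ C : ℝ, ∀ᶠ j in l, ∀ z,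
      ‖F j z‖ ≤ C * Real.exp (suppFn K z + ε * ‖z‖))
    (hP : ∀ᶠ j in l, P (F j)) : IsExpLimit K P f := fun ε hε δ hδ => by
  obtain ⟨C, hC⟩ := hbound (ε / 2) (half_pos hε)
  obtain ⟨j, hPj, hj⟩ :=
    (hP.and (eventually_norm_sub_le_mul_exp hK hne hlim hC (half_lt_self hε) hε.le hδ)).exists
  exact ⟨F j, hPj, hj⟩

lemma tendstoLocallyUniformly_of_continuous_uncurry {X ι : Type*} [TopologicalSpace X]
    {F : X → ℂ → ℂ} (hF : Continuous (Function.uncurry F)) {l : Filter ι} {φ : ι → X} {x : X}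
    (hφ : Tendsto φ l (𝓝 x)) : TendstoLocallyUniformly (fun j => F (φ j)) (F x) l :=
  ContinuousMap.tendsto_iff_tendstoLocallyUniformly.1
    (((ContinuousMap.curry ⟨Function.uncurry F, hF⟩).continuous.tendsto x).comp hφ)

end ExpLimit

section ImSegment

/-- The segment `[-bi, bi]`; `Exp` of it consists of the entire functions `f` with
`f z = O(exp(b |Im z| + ε |z|))` for all `ε > 0`. -/
def imSegment (b : ℝ) : Set ℂ := segment ℝ (-(b * I)) (b * I)

/-- `f` is entire and `exp(H_K)` bounds it without the loss `exp(ε |z|)` allowed in `Exp(K)`. -/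
def IsExpBounded (K : Set ℂ) (f : ℂ → ℂ) : Prop :=
  Differentiable ℂ f ∧ ∃ C : ℝ, ∀ z, ‖f z‖ ≤ C * Real.exp (suppFn K z)

/-- `G` is entire and is bounded by `C exp(H_K)` with a gain of four powers of `|z|`, which makes
series of integer translates of such functions converge. -/
def HasQuarticDecay (K : Set ℂ) (C : ℝ) (G : ℂ → ℂ) : Prop :=
  Differentiable ℂ G ∧ ∀ z, (1 + ‖z‖ ^ 4) * ‖G z‖ ≤ C * Real.exp (suppFn K z)

variable {b ρ : ℝ} {f : ℂ → ℂ}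

lemma isBounded_imSegment (b : ℝ) : Bornology.IsBounded (imSegment b) := isBounded_segment _ _

lemma imSegment_nonempty (b : ℝ) : (imSegment b).Nonempty := ⟨_, left_mem_segment ℝ _ _⟩

lemma suppFn_imSegment (hb : 0 ≤ b) (z : ℂ) : suppFn (imSegment b) z = b * |z.im| := by
  have hre : (z * (b * I)).re = -(b * z.im) := by simp [mul_comm b]
  rw [imSegment, suppFn_segment, mul_neg, neg_re, hre, neg_neg, ← abs_eq_max_neg, abs_mul,
    abs_of_nonneg hb]

lemma suppFn_imSegment_ofReal_mul (hb : 0 ≤ b) {s : ℝ} (hs : 0 ≤ s) (z : ℂ) :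
    suppFn (imSegment b) (s * z) = suppFn (imSegment (s * b)) z := by
  rw [suppFn_imSegment hb, suppFn_imSegment (mul_nonneg hs hb), im_ofReal_mul, abs_mul,
    abs_of_nonneg hs, ← mul_assoc, mul_comm b]

lemma norm_ofReal_mul_of_nonneg {s : ℝ} (hs : 0 ≤ s) (z : ℂ) : ‖(s : ℂ) * z‖ = s * ‖z‖ := by
  rw [norm_mul, norm_real, Real.norm_of_nonneg hs]

lemma suppFn_imSegment_le (hρ : 0 ≤ ρ) (h : ρ ≤ b) (z : ℂ) :
    suppFn (imSegment ρ) z ≤ suppFn (imSegment b) z := by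
  rw [suppFn_imSegment hρ, suppFn_imSegment (hρ.trans h)]
  gcongr

lemma MemExp.comp_ofReal_mul (hf : MemExp (imSegment b) f) (hb : 0 ≤ b) {s : ℝ} (hs : 0 < s) :
    MemExp (imSegment (s * b)) fun z => f (s * z) := by
  refine memExp_of_forall_pos (hf.1.comp (differentiable_id.const_mul (s : ℂ))) fun ε hε => ?_
  obtain ⟨C, -, hC⟩ := hf.exists_norm_le_of_pos (div_pos hε hs)
  refine ⟨C, fun z => (hC (s * z)).trans_eq ?_⟩
  rw [suppFn_imSegment_ofReal_mul hb hs.le, norm_ofReal_mul_of_nonneg hs.le, ← mul_assoc,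
    div_mul_cancel₀ _ hs.ne']

lemma IsExpBounded.comp_ofReal_mul (hf : IsExpBounded (imSegment b) f) (hb : 0 ≤ b) {s : ℝ}
    (hs : 0 ≤ s) : IsExpBounded (imSegment (s * b)) fun z => f (s * z) := by
  obtain ⟨hdiff, C, hC⟩ := hf
  refine ⟨hdiff.comp (differentiable_id.const_mul (s : ℂ)), C, fun z => ?_⟩
  rw [← suppFn_imSegment_ofReal_mul hb hs]
  exact hC (s * z)

lemma IsExpLimit.comp_ofReal_mul (hf : IsExpLimit (imSegment b) (IsExpBounded (imSegment b)) f)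
    (hb : 0 ≤ b) {s : ℝ} (hs : 0 < s) :
    IsExpLimit (imSegment (s * b)) (IsExpBounded (imSegment (s * b))) fun z => f (s * z) :=
  fun ε hε δ hδ => by
    obtain ⟨g, hg, hgf⟩ := hf (ε / s) (div_pos hε hs) δ hδ
    refine ⟨fun z => g (s * z), hg.comp_ofReal_mul hb hs.le, fun z => (hgf (s * z)).trans_eq ?_⟩
    rw [suppFn_imSegment_ofReal_mul hb hs.le, norm_ofReal_mul_of_nonneg hs.le, ← mul_assoc,
      div_mul_cancel₀ _ hs.ne']

lemma MemExp.isExpLimit_smaller_imSegment (hf : MemExp (imSegment b) f) (hb : 0 < b) :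
    IsExpLimit (imSegment b) (fun g => ∃ ρ, 0 ≤ ρ ∧ ρ < b ∧ MemExp (imSegment ρ) g) f := by
  have hcont : Continuous (Function.uncurry fun (s : ℝ) (z : ℂ) => f (s * z)) :=
    hf.1.continuous.comp (by fun_prop)
  have hlim := tendstoLocallyUniformly_of_continuous_uncurry hcont
    (tendsto_nhdsWithin_of_tendsto_nhds tendsto_id : Tendsto id (𝓝[<] (1 : ℝ)) (𝓝 1))
  simp only [ofReal_one, one_mul] at hlim
  have hs : ∀ᶠ s : ℝ in 𝓝[<] 1, 0 < s ∧ s < 1 := Ioo_mem_nhdsLT zero_lt_one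
  refine isExpLimit_of_tendstoLocallyUniformly (isBounded_imSegment b) (imSegment_nonempty b) hlim
    (fun ε hε => ?_) (hs.mono fun s hs => ⟨s * b, (mul_pos hs.1 hb).le,
      mul_lt_of_lt_one_left hb hs.2, hf.comp_ofReal_mul hb.le hs.1⟩)
  obtain ⟨C, hC0, hC⟩ := hf.exists_norm_le_of_pos hε
  refine ⟨C, hs.mono fun s hs z => (hC (s * z)).trans ?_⟩
  rw [suppFn_imSegment_ofReal_mul hb.le hs.1.le, norm_ofReal_mul_of_nonneg hs.1.le]
  gcongr
  · exact suppFn_imSegment_le (mul_pos hs.1 hb).le (mul_le_of_le_one_left hb.le hs.2.le) z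
  · exact mul_le_of_le_one_left (norm_nonneg z) hs.2.le

lemma norm_csinc_ofReal_mul_pow_four_le {κ : ℝ} (hκ : 0 ≤ κ) (z : ℂ) :
    ‖csinc (κ * z) ^ 4‖ ≤ Real.exp (4 * κ * |z.im|) := by
  rw [norm_pow, mul_assoc, ← abs_of_nonneg hκ, ← abs_mul, abs_of_nonneg hκ, ← im_ofReal_mul,
    show (4 : ℝ) = (4 : ℕ) by norm_num, Real.exp_nat_mul]
  gcongr
  exact norm_csinc_le _

lemma norm_pow_four_mul_norm_csinc_pow_four_le (z : ℂ) :
    ‖z‖ ^ 4 * ‖csinc z ^ 4‖ ≤ Real.exp (4 * |z.im|) := by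
  rw [norm_pow, ← mul_pow, show (4 : ℝ) = (4 : ℕ) by norm_num, Real.exp_nat_mul]
  gcongr
  exact norm_mul_norm_csinc_le z

lemma one_add_norm_pow_four_mul_norm_csinc_le {κ : ℝ} (hκ : 0 < κ) (z : ℂ) :
    (1 + ‖z‖ ^ 4) * ‖csinc (κ * z) ^ 4‖ ≤ (1 + (κ ^ 4)⁻¹) * Real.exp (4 * κ * |z.im|) := by
  have h := norm_pow_four_mul_norm_csinc_pow_four_le (κ * z)
  rw [norm_ofReal_mul_of_nonneg hκ.le, im_ofReal_mul, abs_mul, abs_of_pos hκ, mul_pow, mul_assoc,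
    ← mul_assoc 4, ← le_inv_mul_iff₀ (by positivity)] at h
  rw [add_mul, add_mul, one_mul, one_mul]
  exact add_le_add (norm_csinc_ofReal_mul_pow_four_le hκ.le z) h

lemma exp_suppFn_imSegment_mul_exp_le {t : ℝ} (hρ : 0 ≤ ρ) (hb : 0 ≤ b) (h : ρ + t ≤ b) (z : ℂ) :
    Real.exp (suppFn (imSegment ρ) z) * Real.exp (t * |z.im|) ≤
      Real.exp (suppFn (imSegment b) z) := by
  rw [← Real.exp_add, suppFn_imSegment hρ, suppFn_imSegment hb, ← add_mul]
  gcongr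

lemma hasQuarticDecay_mul_csinc_pow_four (hdiff : Differentiable ℂ f) {C : ℝ}
    (hC : ∀ z, ‖f z‖ ≤ C * Real.exp (suppFn (imSegment ρ) z)) (hρ : 0 ≤ ρ) (hb : 0 ≤ b) {κ : ℝ}
    (hκ : 0 < κ) (h : ρ + 4 * κ ≤ b) :
    HasQuarticDecay (imSegment b) (C * (1 + (κ ^ 4)⁻¹)) fun z => f z * csinc (κ * z) ^ 4 := by
  refine ⟨hdiff.mul ((differentiable_csinc.comp (differentiable_id.const_mul (κ : ℂ))).pow 4),
    fun z => ?_⟩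
  have hC0 : 0 ≤ C := nonneg_of_mul_nonneg_left ((norm_nonneg _).trans (hC 0)) (Real.exp_pos _)
  calc (1 + ‖z‖ ^ 4) * ‖f z * csinc (κ * z) ^ 4‖
      = ‖f z‖ * ((1 + ‖z‖ ^ 4) * ‖csinc (κ * z) ^ 4‖) := by rw [norm_mul, mul_left_comm]
    _ ≤ C * Real.exp (suppFn (imSegment ρ) z) *
          ((1 + (κ ^ 4)⁻¹) * Real.exp (4 * κ * |z.im|)) :=
        mul_le_mul (hC z) (one_add_norm_pow_four_mul_norm_csinc_le hκ z) (by positivity)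
          (by positivity)
    _ = C * (1 + (κ ^ 4)⁻¹) * (Real.exp (suppFn (imSegment ρ) z) *
          Real.exp (4 * κ * |z.im|)) := by ring
    _ ≤ C * (1 + (κ ^ 4)⁻¹) * Real.exp (suppFn (imSegment b) z) := by
        gcongr
        exact exp_suppFn_imSegment_mul_exp_le hρ hb h z

lemma IsExpBounded.isExpLimit_hasQuarticDecay (hf : IsExpBounded (imSegment ρ) f) (hρ : 0 ≤ ρ)
    (hρb : ρ < b) :
    IsExpLimit (imSegment b) (fun G => ∃ C, HasQuarticDecay (imSegment b) C G) f := by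
  obtain ⟨hdiff, C, hC⟩ := hf
  have hb : 0 ≤ b := hρ.trans hρb.le
  have hC0 : 0 ≤ C := nonneg_of_mul_nonneg_left ((norm_nonneg _).trans (hC 0)) (Real.exp_pos _)
  have hcont : Continuous (Function.uncurry fun (κ : ℝ) (z : ℂ) => f z * csinc (κ * z) ^ 4) := by
    have hf := hdiff.continuous
    have hcsinc := differentiable_csinc.continuous
    simp only [Function.uncurry_def]
    fun_prop
  have hlim := tendstoLocallyUniformly_of_continuous_uncurry hcont
    (tendsto_nhdsWithin_of_tendsto_nhds tendsto_id : Tendsto id (𝓝[>] (0 : ℝ)) (𝓝 0))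
  simp only [ofReal_zero, zero_mul, csinc_zero, one_pow, mul_one] at hlim
  have hκ : ∀ᶠ κ : ℝ in 𝓝[>] 0, 0 < κ ∧ ρ + 4 * κ ≤ b := by
    filter_upwards [Ioo_mem_nhdsGT (div_pos (sub_pos.2 hρb) four_pos)] with κ hκ
    exact ⟨hκ.1, by linarith [(lt_div_iff₀' four_pos).1 hκ.2]⟩
  refine isExpLimit_of_tendstoLocallyUniformly (isBounded_imSegment b) (imSegment_nonempty b) hlim
    (fun ε hε => ⟨C, hκ.mono fun κ hκ z => ?_⟩)
    (hκ.mono fun κ hκ => ⟨_, hasQuarticDecay_mul_csinc_pow_four hdiff hC hρ hb hκ.1 hκ.2⟩)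
  calc ‖f z * csinc (κ * z) ^ 4‖
      ≤ C * Real.exp (suppFn (imSegment ρ) z) * Real.exp (4 * κ * |z.im|) := by
        rw [norm_mul]
        gcongr
        exacts [hC z, norm_csinc_ofReal_mul_pow_four_le hκ.1.le z]
    _ ≤ C * Real.exp (suppFn (imSegment b) z) := by
        rw [mul_assoc]
        gcongr
        exact exp_suppFn_imSegment_mul_exp_le hρ hb hκ.2 z
    _ ≤ C * Real.exp (suppFn (imSegment b) z + ε * ‖z‖) := by
        gcongr
        exact le_add_of_nonneg_right (by positivity)

end ImSegment

section Sampling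

/-- The function `f` damped on the real axis by a Gaussian of width `√((N + 1/2) / η)`: the
damping gains `exp(-η N)` at the real points of the circle `|z| = N + 1/2`, at the expense of
increasing the type of `f` there by `2η` only. -/
noncomputable def gaussDamp (f : ℂ → ℂ) (η : ℝ) (N : ℕ) (z : ℂ) : ℂ :=
  f z * exp (-((η / (N + 1 / 2) : ℝ) * z ^ 2))

variable {f : ℂ → ℂ} {ρ ε η C : ℝ} {N : ℕ} {z : ℂ}

lemma differentiable_gaussDamp (hf : Differentiable ℂ f) (η : ℝ) (N : ℕ) :
    Differentiable ℂ (gaussDamp f η N) :=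
  hf.mul (by fun_prop)

lemma norm_gaussDamp (f : ℂ → ℂ) (η : ℝ) (N : ℕ) (z : ℂ) :
    ‖gaussDamp f η N z‖ = ‖f z‖ * Real.exp (η / (N + 1 / 2) * (z.im ^ 2 - z.re ^ 2)) := by
  rw [gaussDamp, norm_mul, norm_exp, neg_re, re_ofReal_mul, sq z, mul_re, ← sq, ← sq, ← mul_neg,
    neg_sub]

lemma norm_gaussDamp_intCast_le (hC : ∀ z, ‖f z‖ ≤ C * Real.exp (ρ * |z.im| + ε * ‖z‖))
    (hC0 : 0 ≤ C) (hε : 0 ≤ ε) (hη : 0 ≤ η) {k : ℤ} (hk : k ∈ Finset.Icc (-(N : ℤ)) N) :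
    ‖gaussDamp f η N k‖ ≤ C * Real.exp (ε * (N + 1 / 2)) := by
  have hkN : ‖(k : ℂ)‖ ≤ N + 1 / 2 := by linarith [norm_intCast_le_of_mem_Icc hk]
  have hgauss : η / (N + 1 / 2) * ((k : ℂ).im ^ 2 - (k : ℂ).re ^ 2) ≤ 0 := by
    rw [intCast_im, zero_pow two_ne_zero, zero_sub]
    exact mul_nonpos_of_nonneg_of_nonpos (by positivity) (neg_nonpos.2 (sq_nonneg _))
  rw [norm_gaussDamp, ← mul_one (C * _)]
  gcongr
  · refine (hC k).trans ?_
    rw [intCast_im, abs_zero, mul_zero, zero_add]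
    gcongr
  · exact Real.exp_le_one_iff.2 hgauss

lemma norm_cardSum_gaussDamp_le (hC : ∀ z, ‖f z‖ ≤ C * Real.exp (ρ * |z.im| + ε * ‖z‖))
    (hC0 : 0 ≤ C) (hε : 0 ≤ ε) (hη : 0 ≤ η) (N : ℕ) (z : ℂ) :
    ‖cardSum (gaussDamp f η N) N z‖ ≤
      (2 * N + 1) * (C * Real.exp (ε * (N + 1 / 2))) * Real.exp (π * |z.im|) :=
  norm_cardSum_le (fun _ hk => norm_gaussDamp_intCast_le hC hC0 hε hη hk) z

lemma im_sq_div_le_of_norm_le {r : ℝ} (hr : 0 < r) (hz : ‖z‖ ≤ r) : z.im ^ 2 / r ≤ |z.im| := by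
  rw [div_le_iff₀ hr, ← sq_abs, sq]
  gcongr
  exact (abs_im_le_norm z).trans hz

lemma norm_gaussDamp_le_mul_norm_sin (hC : ∀ z, ‖f z‖ ≤ C * Real.exp (ρ * |z.im| + ε * ‖z‖))
    (hC0 : 0 ≤ C) (hη : 0 ≤ η) (hηρ : ρ + 2 * η ≤ π) (hz : ‖z‖ = N + 1 / 2) :
    ‖gaussDamp f η N z‖ ≤ 3 * C * Real.exp (-((η - ε) * (N + 1 / 2))) * ‖sin (π * z)‖ := by
  have hR : (0 : ℝ) < N + 1 / 2 := by positivity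
  have hnorm : z.re ^ 2 + z.im ^ 2 = (N + 1 / 2 : ℝ) ^ 2 := by
    rw [← hz, ← normSq_eq_norm_sq, normSq_apply, sq, sq]
  have hgauss : η / (N + 1 / 2) * (z.im ^ 2 - z.re ^ 2) ≤ 2 * η * |z.im| - η * (N + 1 / 2) := by
    calc η / (N + 1 / 2) * (z.im ^ 2 - z.re ^ 2)
        = η / (N + 1 / 2) * (2 * z.im ^ 2 - (N + 1 / 2 : ℝ) ^ 2) := by
          rw [← hnorm]
          ring
      _ = 2 * η * (z.im ^ 2 / (N + 1 / 2)) - η * (N + 1 / 2) := by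
          field_simp
      _ ≤ 2 * η * |z.im| - η * (N + 1 / 2) := by
          gcongr
          exact im_sq_div_le_of_norm_le hR hz.le
  have hfz := hC z
  rw [hz] at hfz
  calc ‖gaussDamp f η N z‖
      ≤ C * Real.exp (ρ * |z.im| + ε * (N + 1 / 2)) *
          Real.exp (2 * η * |z.im| - η * (N + 1 / 2)) := by
        rw [norm_gaussDamp]
        gcongr
    _ = C * Real.exp (-((η - ε) * (N + 1 / 2))) * Real.exp ((ρ + 2 * η) * |z.im|) := by
        rw [mul_assoc, mul_assoc C, ← Real.exp_add, ← Real.exp_add]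
        ring_nf
    _ ≤ C * Real.exp (-((η - ε) * (N + 1 / 2))) * (3 * ‖sin (π * z)‖) := by
        gcongr
        exact (Real.exp_le_exp.2 (by gcongr)).trans (exp_pi_mul_abs_im_le_of_norm_eq hz)
    _ = 3 * C * Real.exp (-((η - ε) * (N + 1 / 2))) * ‖sin (π * z)‖ := by ring

lemma norm_gaussDamp_sub_cardSum_le (hf : Differentiable ℂ f)
    (hC : ∀ z, ‖f z‖ ≤ C * Real.exp (ρ * |z.im| + ε * ‖z‖)) (hC0 : 0 ≤ C) (hη : 0 ≤ η)
    (hηρ : ρ + 2 * η ≤ π) (hz : ‖z‖ ≤ (N + 1 / 2) / 2) :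
    ‖gaussDamp f η N z - cardSum (gaussDamp f η N) N z‖ ≤
      6 * C * Real.exp (-((η - ε) * (N + 1 / 2))) * Real.exp (π * |z.im|) := by
  refine (norm_sub_cardSum_le (differentiable_gaussDamp hf η N)
    (fun ζ hζ => norm_gaussDamp_le_mul_norm_sin hC hC0 hη hηρ hζ) hz).trans_eq ?_
  ring

lemma norm_gaussDamp_le (hC : ∀ z, ‖f z‖ ≤ C * Real.exp (ρ * |z.im| + ε * ‖z‖)) (hC0 : 0 ≤ C)
    (hη : 0 ≤ η) (hηρ : ρ + η ≤ π) (hz : ‖z‖ ≤ N + 1 / 2) :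
    ‖gaussDamp f η N z‖ ≤ C * Real.exp (π * |z.im| + ε * ‖z‖) := by
  have hR : (0 : ℝ) < N + 1 / 2 := by positivity
  have hgauss : η / (N + 1 / 2) * (z.im ^ 2 - z.re ^ 2) ≤ η * |z.im| := by
    calc η / (N + 1 / 2) * (z.im ^ 2 - z.re ^ 2)
        ≤ η / (N + 1 / 2) * z.im ^ 2 := by
          gcongr
          exact sub_le_self _ (sq_nonneg _)
      _ = η * (z.im ^ 2 / (N + 1 / 2)) := by rw [div_mul_eq_mul_div, mul_div_assoc]
      _ ≤ η * |z.im| := by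
          gcongr
          exact im_sq_div_le_of_norm_le hR hz
  calc ‖gaussDamp f η N z‖
      ≤ C * Real.exp (ρ * |z.im| + ε * ‖z‖) * Real.exp (η * |z.im|) := by
        rw [norm_gaussDamp]
        gcongr
        exact hC z
    _ = C * Real.exp ((ρ + η) * |z.im| + ε * ‖z‖) := by
        rw [mul_assoc, ← Real.exp_add]
        ring_nf
    _ ≤ C * Real.exp (π * |z.im| + ε * ‖z‖) := by gcongr

lemma norm_cardSum_gaussDamp_le_of_norm_le (hf : Differentiable ℂ f)
    (hC : ∀ z, ‖f z‖ ≤ C * Real.exp (ρ * |z.im| + ε * ‖z‖)) (hC0 : 0 ≤ C) (hε : 0 ≤ ε)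
    (hη : 0 ≤ η) (hεη : ε ≤ η) (hηρ : ρ + 2 * η ≤ π) (hz : ‖z‖ ≤ (N + 1 / 2) / 2) :
    ‖cardSum (gaussDamp f η N) N z‖ ≤ 7 * C * Real.exp (π * |z.im| + ε * ‖z‖) := by
  have hR : (0 : ℝ) < N + 1 / 2 := by positivity
  have hdecay : Real.exp (-((η - ε) * (N + 1 / 2))) ≤ 1 :=
    Real.exp_le_one_iff.2 (neg_nonpos.2 (mul_nonneg (sub_nonneg.2 hεη) hR.le))
  have hexp : Real.exp (π * |z.im|) ≤ Real.exp (π * |z.im| + ε * ‖z‖) :=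
    Real.exp_le_exp.2 (le_add_of_nonneg_right (by positivity))
  calc ‖cardSum (gaussDamp f η N) N z‖
      ≤ ‖gaussDamp f η N z‖ + ‖gaussDamp f η N z - cardSum (gaussDamp f η N) N z‖ :=
        norm_le_norm_add_norm_sub _ _
    _ ≤ C * Real.exp (π * |z.im| + ε * ‖z‖) + 6 * C * 1 * Real.exp (π * |z.im| + ε * ‖z‖) := by
        refine add_le_add (norm_gaussDamp_le hC hC0 hη (by linarith) (by linarith))
          ((norm_gaussDamp_sub_cardSum_le hf hC hC0 hη hηρ hz).trans ?_)
        gcongr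
    _ = 7 * C * Real.exp (π * |z.im| + ε * ‖z‖) := by ring

lemma norm_cardSum_gaussDamp_le_of_lt_norm
    (hC : ∀ z, ‖f z‖ ≤ C * Real.exp (ρ * |z.im| + ε * ‖z‖)) (hC0 : 0 ≤ C) (hε : 0 < ε)
    (hη : 0 ≤ η) (hz : (N + 1 / 2) / 2 < ‖z‖) :
    ‖cardSum (gaussDamp f η N) N z‖ ≤ 4 / ε * C * Real.exp (π * |z.im| + 3 * ε * ‖z‖) := by
  have hcount : (2 * N + 1 : ℝ) ≤ 4 / ε * Real.exp (ε * ‖z‖) := by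
    rw [div_mul_eq_mul_div, le_div_iff₀ hε]
    linarith [Real.add_one_le_exp (ε * ‖z‖), mul_lt_mul_of_pos_left hz hε]
  have hnode : Real.exp (ε * (N + 1 / 2)) ≤ Real.exp (2 * (ε * ‖z‖)) :=
    Real.exp_le_exp.2 (by linarith [mul_lt_mul_of_pos_left hz hε])
  calc ‖cardSum (gaussDamp f η N) N z‖
      ≤ (2 * N + 1) * (C * Real.exp (ε * (N + 1 / 2))) * Real.exp (π * |z.im|) :=
        norm_cardSum_gaussDamp_le hC hC0 hε.le hη N z
    _ ≤ 4 / ε * Real.exp (ε * ‖z‖) * (C * Real.exp (2 * (ε * ‖z‖))) * Real.exp (π * |z.im|) := by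
        gcongr
    _ = 4 / ε * C * (Real.exp (ε * ‖z‖) * Real.exp (2 * (ε * ‖z‖)) * Real.exp (π * |z.im|)) := by
        ring
    _ = 4 / ε * C * Real.exp (π * |z.im| + 3 * ε * ‖z‖) := by
        rw [← Real.exp_add, ← Real.exp_add]
        ring_nf

lemma tendsto_natCast_add_half_atTop : Tendsto (fun N : ℕ => (N + 1 / 2 : ℝ)) atTop atTop :=
  tendsto_atTop_add_const_right _ _ tendsto_natCast_atTop_atTop

lemma tendstoLocallyUniformly_gaussDamp (hf : Continuous f) (η : ℝ) :
    TendstoLocallyUniformly (gaussDamp f η) f atTop := by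
  have hcont : Continuous (Function.uncurry fun (a : ℝ) (z : ℂ) => f z * exp (-(a * z ^ 2))) := by
    simp only [Function.uncurry_def]
    fun_prop
  have hlim := tendstoLocallyUniformly_of_continuous_uncurry hcont
    (tendsto_natCast_add_half_atTop.const_div_atTop η)
  simp only [ofReal_zero, zero_mul, neg_zero, exp_zero, mul_one] at hlim
  exact hlim

lemma tendstoLocallyUniformly_cardSum_gaussDamp (hf : Differentiable ℂ f)
    (hC : ∀ z, ‖f z‖ ≤ C * Real.exp (ρ * |z.im| + ε * ‖z‖)) (hC0 : 0 ≤ C) (hη : 0 ≤ η)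
    (hεη : ε < η) (hηρ : ρ + 2 * η ≤ π) :
    TendstoLocallyUniformly (fun N => cardSum (gaussDamp f η N) N) f atTop := by
  have herr : TendstoLocallyUniformly
      (fun N z => gaussDamp f η N z - cardSum (gaussDamp f η N) N z) (fun _ => 0) atTop := by
    refine Metric.tendstoLocallyUniformly_iff.2 fun δ hδ x =>
      ⟨_, Metric.ball_mem_nhds x one_pos, ?_⟩
    have hdecay : Tendsto (fun N : ℕ => 6 * C * Real.exp (-((η - ε) * (N + 1 / 2))) *
        Real.exp (π * (‖x‖ + 1))) atTop (𝓝 0) := by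
      have hexp := Real.tendsto_exp_neg_atTop_nhds_zero.comp
        (tendsto_natCast_add_half_atTop.const_mul_atTop (sub_pos.2 hεη))
      simpa using (hexp.const_mul (6 * C)).mul_const (Real.exp (π * (‖x‖ + 1)))
    filter_upwards [hdecay.eventually_lt_const hδ,
      tendsto_natCast_add_half_atTop.eventually_ge_atTop (2 * (‖x‖ + 1))] with N hN hxN z hz
    have hzx : ‖z‖ ≤ ‖x‖ + 1 := by
      linarith [norm_le_norm_add_norm_sub x z, mem_ball_iff_norm'.1 hz]
    rw [dist_zero_left]
    refine (norm_gaussDamp_sub_cardSum_le hf hC hC0 hη hηρ (by linarith)).trans_lt (hN.trans_le' ?_)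
    gcongr
    exact (abs_im_le_norm z).trans hzx
  have hsub := (tendstoLocallyUniformly_gaussDamp hf.continuous η).sub herr
  simpa only [Pi.sub_def, sub_sub_cancel, sub_zero] using hsub

theorem MemExp.isExpLimit_isExpBounded_of_lt_pi (hf : MemExp (imSegment ρ) f) (hρ : 0 ≤ ρ)
    (hρπ : ρ < π) : IsExpLimit (imSegment π) (IsExpBounded (imSegment π)) f := by
  set η := (π - ρ) / 2 with hη
  have hη0 : 0 < η := half_pos (sub_pos.2 hρπ)
  have hηρ : ρ + 2 * η ≤ π := by linarith
  have hbound : ∀ ε > 0, ∃ C ≥ (0 : ℝ), ∀ z, ‖f z‖ ≤ C * Real.exp (ρ * |z.im| + ε * ‖z‖) := by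
    simpa only [suppFn_imSegment hρ] using fun ε hε => hf.exists_norm_le_of_pos (ε := ε) hε
  refine isExpLimit_of_tendstoLocallyUniformly (F := fun N => cardSum (gaussDamp f η N) N)
    (l := atTop) (isBounded_imSegment π) (imSegment_nonempty π) ?_ (fun ε hε => ?_)
    (Eventually.of_forall fun N => ⟨differentiable_cardSum _ _, ?_⟩)
  · obtain ⟨C, hC0, hC⟩ := hbound (η / 2) (half_pos hη0)
    exact tendstoLocallyUniformly_cardSum_gaussDamp hf.1 hC hC0 hη0.le (half_lt_self hη0) hηρ
  · set ε' := min (ε / 3) η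
    have hε' : 0 < ε' := lt_min (by positivity) hη0
    have hε'ε : 3 * ε' ≤ ε := by linarith [min_le_left (ε / 3) η]
    obtain ⟨C, hC0, hC⟩ := hbound ε' hε'
    refine ⟨7 * C + 4 / ε' * C, Eventually.of_forall fun N z => ?_⟩
    rw [suppFn_imSegment Real.pi_pos.le]
    rcases le_or_gt ‖z‖ ((N + 1 / 2) / 2) with hz | hz
    · refine (norm_cardSum_gaussDamp_le_of_norm_le hf.1 hC hC0 hε'.le hη0.le (min_le_right _ _)
        hηρ hz).trans ?_
      gcongr
      · exact le_add_of_nonneg_right (by positivity)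
      · linarith
    · refine (norm_cardSum_gaussDamp_le_of_lt_norm hC hC0 hε' hη0.le hz).trans ?_
      gcongr
      exact le_add_of_nonneg_left (by positivity)
  · obtain ⟨C, hC0, hC⟩ := hbound 1 one_pos
    refine ⟨(2 * N + 1) * (C * Real.exp (1 * (N + 1 / 2))), fun z => ?_⟩
    rw [suppFn_imSegment Real.pi_pos.le]
    exact norm_cardSum_gaussDamp_le hC hC0 zero_le_one hη0.le N z

end Sampling

section QuarticDecayDense

variable {K L : Set ℂ} {b ρ : ℝ} {f : ℂ → ℂ} {c : ℂ}

lemma MemExp.isExpLimit_isExpBounded (hf : MemExp (imSegment ρ) f) (hρ : 0 ≤ ρ) (hρb : ρ < b) :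
    IsExpLimit (imSegment b) (IsExpBounded (imSegment b)) f := by
  have hb : 0 < b := hρ.trans_lt hρb
  have hs : 0 < b / π := div_pos hb Real.pi_pos
  have hscaled := ((hf.comp_ofReal_mul hρ (inv_pos.2 hs)).isExpLimit_isExpBounded_of_lt_pi
    (by positivity) (by rwa [inv_div, div_mul_comm, mul_lt_iff_lt_one_left Real.pi_pos,
      div_lt_one hb])).comp_ofReal_mul Real.pi_pos.le hs
  simpa only [← mul_assoc, ← ofReal_mul, inv_mul_cancel₀ hs.ne', ofReal_one, one_mul,
    div_mul_cancel₀ b Real.pi_ne_zero] using hscaled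

theorem MemExp.isExpLimit_hasQuarticDecay_imSegment (hf : MemExp (imSegment b) f) (hb : 0 < b) :
    IsExpLimit (imSegment b) (fun G => ∃ C, HasQuarticDecay (imSegment b) C G) f := by
  refine (hf.isExpLimit_smaller_imSegment hb).trans fun g ⟨ρ, hρ, hρb, hg⟩ => ?_
  obtain ⟨σ, hρσ, hσb⟩ := exists_between hρb
  have hσ : 0 ≤ σ := hρ.trans hρσ.le
  exact ((hg.isExpLimit_isExpBounded hρ hρσ).mono (suppFn_imSegment_le hσ hσb.le)).trans
    fun q hq => hq.isExpLimit_hasQuarticDecay hσ hσb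

lemma MemExp.mul_exp_of_suppFn_eq (hf : MemExp K f)
    (hL : ∀ z, suppFn L z = suppFn K z + (z * c).re) : MemExp L fun z => f z * exp (z * c) := by
  refine memExp_of_forall_pos (hf.1.mul (by fun_prop)) fun ε hε => ?_
  obtain ⟨C, -, hC⟩ := hf.exists_norm_le_of_pos hε
  refine ⟨C, fun z => ?_⟩
  rw [norm_mul, norm_exp, hL, add_right_comm, Real.exp_add, ← mul_assoc]
  gcongr
  exact hC z

lemma HasQuarticDecay.mul_exp_of_suppFn_eq {C : ℝ} (hf : HasQuarticDecay K C f)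
    (hL : ∀ z, suppFn L z = suppFn K z + (z * c).re) :
    HasQuarticDecay L C fun z => f z * exp (z * c) := by
  refine ⟨hf.1.mul (by fun_prop), fun z => ?_⟩
  rw [norm_mul, norm_exp, hL, Real.exp_add, ← mul_assoc, ← mul_assoc]
  exact mul_le_mul_of_nonneg_right (hf.2 z) (Real.exp_nonneg _)

lemma IsExpLimit.mul_exp_of_suppFn_eq {P Q : (ℂ → ℂ) → Prop} (hf : IsExpLimit K P f)
    (hL : ∀ z, suppFn L z = suppFn K z + (z * c).re)
    (hPQ : ∀ g, P g → Q fun z => g z * exp (z * c)) :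
    IsExpLimit L Q fun z => f z * exp (z * c) := fun ε hε δ hδ => by
  obtain ⟨g, hg, hgf⟩ := hf ε hε δ hδ
  refine ⟨_, hPQ g hg, fun z => ?_⟩
  rw [← sub_mul, norm_mul, norm_exp, hL, add_right_comm, Real.exp_add, ← mul_assoc]
  gcongr
  exact hgf z

lemma suppFn_segment_eq_suppFn_imSegment_add {v w : ℂ} (hv : v.re = 0) (hw : w.re = 0) (z : ℂ) :
    suppFn (segment ℝ v w) z =
      suppFn (imSegment (|v.im - w.im| / 2)) z + (z * ((v + w) / 2)).re := by
  have hre : ∀ u : ℂ, u.re = 0 → (z * u).re = -(z.im * u.im) := fun u hu => by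
    rw [mul_re, hu, mul_zero, zero_sub]
  have hc : ((v + w) / 2).re = 0 := by simp [hv, hw]
  have hcim : ((v + w) / 2).im = (v.im + w.im) / 2 := by simp
  rw [suppFn_segment, suppFn_imSegment (by positivity), hre v hv, hre w hw, hre _ hc, hcim,
    div_mul_eq_mul_div, ← abs_mul]
  have hmax := max_sub_min_eq_abs (-(z.im * v.im)) (-(z.im * w.im))
  have hadd := max_add_min (-(z.im * v.im)) (-(z.im * w.im))
  rw [show -(z.im * w.im) - -(z.im * v.im) = (v.im - w.im) * z.im by ring] at hmax
  linarith

theorem MemExp.isExpLimit_hasQuarticDecay_segment {v w : ℂ} (hf : MemExp (segment ℝ v w) f)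
    (hvw : v ≠ w) (hv : v.re = 0) (hw : w.re = 0) :
    IsExpLimit (segment ℝ v w) (fun G => ∃ C, HasQuarticDecay (segment ℝ v w) C G) f := by
  have him : v.im ≠ w.im := fun h => hvw (Complex.ext (hv.trans hw.symm) h)
  have hsupp := suppFn_segment_eq_suppFn_imSegment_add hv hw
  have hcentered := hf.mul_exp_of_suppFn_eq (L := imSegment (|v.im - w.im| / 2))
    (c := -((v + w) / 2)) fun z => by rw [hsupp, mul_neg, neg_re, add_neg_cancel_right]
  have hlim := (hcentered.isExpLimit_hasQuarticDecay_imSegment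
    (half_pos (abs_pos.2 (sub_ne_zero.2 him)))).mul_exp_of_suppFn_eq
    (Q := fun G => ∃ C, HasQuarticDecay (segment ℝ v w) C G) hsupp
    (fun g ⟨C, hg⟩ => ⟨C, hg.mul_exp_of_suppFn_eq hsupp⟩)
  simpa only [mul_assoc, ← exp_add, mul_neg, neg_add_cancel, exp_zero, mul_one] using hlim

end QuarticDecayDense

section Separability

variable {K : Set ℂ} {C : ℝ} {G : ℂ → ℂ}

lemma HasQuarticDecay.norm_le (hG : HasQuarticDecay K C G) (z : ℂ) :
    ‖G z‖ ≤ C * Real.exp (suppFn K z) :=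
  (le_mul_of_one_le_left (norm_nonneg _) (le_add_of_nonneg_right (by positivity))).trans (hG.2 z)

lemma HasQuarticDecay.mono (hG : HasQuarticDecay K C G) {D : ℝ} (h : C ≤ D) :
    HasQuarticDecay K D G :=
  ⟨hG.1, fun z => (hG.2 z).trans (by gcongr)⟩

lemma hasQuarticDecay_zero (hC : 0 ≤ C) : HasQuarticDecay K C 0 := by
  refine ⟨differentiable_const 0, fun z => ?_⟩
  rw [Pi.zero_apply, norm_zero, mul_zero]
  positivity

lemma exists_seq_hasQuarticDecay_of_nonneg (hK : Bornology.IsBounded K) (hne : K.Nonempty)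
    (hC : 0 ≤ C) :
    ∃ d : ℕ → ℂ → ℂ, (∀ i, HasQuarticDecay K C (d i)) ∧
      ∀ g, HasQuarticDecay K C g → IsExpLimit K (· ∈ Set.range d) g := by
  let S : Set C(ℂ, ℂ) := {g | HasQuarticDecay K C g}
  have : Nonempty S := ⟨⟨0, hasQuarticDecay_zero hC⟩⟩
  let d := TopologicalSpace.denseSeq S
  refine ⟨fun i => d i, fun i => (d i).2, fun g hg => ?_⟩
  let g' : S := ⟨⟨g, hg.1.continuous⟩, hg⟩
  have : (comap d (𝓝 g')).NeBot := comap_neBot_iff_frequently.2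
    (mem_closure_iff_frequently.1 (TopologicalSpace.denseRange_denseSeq S g'))
  have hlim : TendstoLocallyUniformly (fun i => ⇑(d i : C(ℂ, ℂ))) g (comap d (𝓝 g')) :=
    ContinuousMap.tendsto_iff_tendstoLocallyUniformly.1
      ((continuous_subtype_val.tendsto g').comp tendsto_comap)
  refine isExpLimit_of_tendstoLocallyUniformly hK hne hlim
    (fun ε hε => ⟨C, Eventually.of_forall fun i z => ((d i).2.norm_le z).trans ?_⟩)
    (Eventually.of_forall fun i => Set.mem_range_self i)
  gcongr
  exact le_add_of_nonneg_right (by positivity)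

theorem exists_seq_hasQuarticDecay (hK : Bornology.IsBounded K) (hne : K.Nonempty) :
    ∃ G : ℕ → ℂ → ℂ, (∀ l : ℕ, HasQuarticDecay K (l + 1) (G l)) ∧
      ∀ f, IsExpLimit K (fun g => ∃ C, HasQuarticDecay K C g) f →
        ∀ m, IsExpLimit K (· ∈ G '' Set.Ici m) f := by
  choose d hd hdense using fun n : ℕ =>
    exists_seq_hasQuarticDecay_of_nonneg hK hne (Nat.cast_nonneg (α := ℝ) n)
  refine ⟨fun l => d l.unpair.1 l.unpair.2, fun l => (hd _ _).mono ?_, fun f hf m => ?_⟩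
  · exact_mod_cast (Nat.unpair_left_le l).trans l.le_succ
  refine hf.trans fun g ⟨C, hg⟩ => ?_
  obtain ⟨n, hn⟩ := exists_nat_ge C
  intro ε hε δ hδ
  obtain ⟨_, ⟨i, rfl⟩, hi⟩ := hdense (max n m) g
    (hg.mono (hn.trans (by exact_mod_cast le_max_left n m))) ε hε δ hδ
  refine ⟨_, ⟨Nat.pair (max n m) i, (le_max_right n m).trans (Nat.left_le_pair _ _), rfl⟩, ?_⟩
  simpa only [Nat.unpair_pair] using hi

end Separability

section BlockPositions

/-- The level of the `j`-th block: the ruler sequence `0, 1, 0, 2, 0, 1, 0, 3, …`, in which every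
value `l` recurs with period `2 ^ (l + 1)`. -/
def blockLevel (j : ℕ) : ℕ := padicValNat 2 (j + 1)

/-- The centre of the `j`-th block, when the blocks are intervals laid end to end and a block of
level `l` has half-length `l + 1`. -/
def blockPos (j : ℕ) : ℕ :=
  ∑ i ∈ Finset.range j, 2 * (blockLevel i + 1) + (blockLevel j + 1)

lemma sum_blockLevel (j : ℕ) :
    ∑ i ∈ Finset.range j, blockLevel i = padicValNat 2 j.factorial := by
  induction j with
  | zero => simp
  | succ j ih =>
    rw [Finset.sum_range_succ, ih, Nat.factorial_succ,
      padicValNat.mul j.succ_ne_zero j.factorial_ne_zero, add_comm, blockLevel]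

lemma sum_blockLevel_le (j : ℕ) : ∑ i ∈ Finset.range j, blockLevel i ≤ j := by
  have hlegendre := sub_one_mul_padicValNat_factorial (p := 2) j
  rw [sum_blockLevel]
  omega

lemma blockPos_succ (j : ℕ) :
    blockPos (j + 1) = blockPos j + (blockLevel j + 1) + (blockLevel (j + 1) + 1) := by
  rw [blockPos, blockPos, Finset.sum_range_succ]
  ring

lemma blockPos_le (j : ℕ) : blockPos j ≤ 4 * (j + 1) := by
  have hsum := sum_blockLevel_le (j + 1)
  rw [Finset.sum_range_succ] at hsum
  rw [blockPos, ← Finset.mul_sum, Finset.sum_add_distrib, Finset.sum_const, Finset.card_range,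
    smul_eq_mul]
  omega

lemma blockPos_add_le {i j : ℕ} (h : i < j) :
    blockPos i + (blockLevel i + 1) + (blockLevel j + 1) ≤ blockPos j := by
  induction j, h using Nat.le_induction with
  | base => exact (blockPos_succ i).ge
  | succ j _ ih =>
    rw [blockPos_succ]
    omega

lemma blockPos_strictMono : StrictMono blockPos := fun i j h => by
  have := blockPos_add_le h
  omega

lemma blockLevel_mul_sq_le_blockPos_sub_pow_four {i j : ℕ} (h : i ≠ j) :
    ((blockLevel i : ℝ) + 1) * (blockLevel j + 1) * ((j : ℝ) - i) ^ 2 ≤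
      ((blockPos j : ℝ) - blockPos i) ^ 4 := by
  wlog hij : i < j generalizing i j
  · have hswap := this h.symm (lt_of_le_of_ne (not_lt.1 hij) h.symm)
    rw [mul_comm ((blockLevel i : ℝ) + 1), ← neg_sub (i : ℝ), neg_sq,
      ← neg_sub (blockPos i : ℝ), Even.neg_pow (by decide)]
    exact hswap
  have hgap : (blockPos i : ℝ) + (blockLevel i + 1) + (blockLevel j + 1) ≤ blockPos j := by
    exact_mod_cast blockPos_add_le hij
  have hindex : (j : ℝ) - i ≤ blockPos j - blockPos i := by
    have hmono := blockPos_strictMono.add_le_nat (j - i) i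
    rw [Nat.sub_add_cancel hij.le] at hmono
    have hmono' : ((j - i : ℕ) : ℝ) + blockPos i ≤ blockPos j := by exact_mod_cast hmono
    rw [Nat.cast_sub hij.le] at hmono'
    linarith
  have hij' : (0 : ℝ) ≤ (j : ℝ) - i := sub_nonneg.2 (by exact_mod_cast hij.le)
  calc ((blockLevel i : ℝ) + 1) * (blockLevel j + 1) * ((j : ℝ) - i) ^ 2
      ≤ ((blockPos j : ℝ) - blockPos i) * (blockPos j - blockPos i) *
          ((blockPos j : ℝ) - blockPos i) ^ 2 := by
        gcongr
        · exact mul_self_nonneg _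
        · linarith
        · linarith
        · linarith
    _ = ((blockPos j : ℝ) - blockPos i) ^ 4 := by ring

lemma blockLevel_mul_sq_le_blockPos_pow_four (j : ℕ) :
    ((blockLevel j : ℝ) + 1) * ((j : ℝ) + 1) ^ 2 ≤ (blockPos j : ℝ) ^ 4 := by
  have hlevel : blockLevel j + 1 ≤ blockPos j := le_add_self
  have hindex : j + 1 ≤ blockPos j :=
    (Nat.add_le_add_left le_add_self j).trans (blockPos_strictMono.add_le_nat j 0)
  have hpos : 1 ≤ blockPos j := le_add_self.trans hindex
  calc ((blockLevel j : ℝ) + 1) * ((j : ℝ) + 1) ^ 2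
      ≤ (blockPos j : ℝ) * (blockPos j : ℝ) ^ 2 := by
        gcongr <;> exact_mod_cast ‹_›
    _ = (blockPos j : ℝ) ^ 3 := by ring
    _ ≤ (blockPos j : ℝ) ^ 4 := pow_le_pow_right₀ (by exact_mod_cast hpos) (by norm_num)

lemma blockLevel_two_pow_mul_odd_sub_one (l m : ℕ) : blockLevel (2 ^ l * (2 * m + 1) - 1) = l := by
  rw [blockLevel, Nat.sub_add_cancel (Nat.succ_le_of_lt (by positivity)),
    padicValNat.mul (by positivity) (by omega), padicValNat.prime_pow,
    padicValNat.eq_zero_of_not_dvd (by omega), add_zero]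

lemma lowerDensity_pos_of_forall_blockLevel_eq {A : Set ℕ} {l : ℕ}
    (h : ∀ j, blockLevel j = l → blockPos j ∈ A) : 0 < lowerDensity A := by
  refine lowerDensity_pos_of_injective (a := fun m => blockPos (2 ^ l * (2 * m + 1) - 1))
    (c := 2 ^ (l + 3)) (blockPos_strictMono.injective.comp fun a b hab => ?_) (by positivity)
    (fun m => ?_) fun m => h _ (blockLevel_two_pow_mul_odd_sub_one l m)
  · have hmul : 2 ^ l * (2 * a + 1) = 2 ^ l * (2 * b + 1) :=
      Nat.sub_one_cancel (by positivity) (by positivity) hab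
    have := Nat.eq_of_mul_eq_mul_left (by positivity) hmul
    omega
  · calc blockPos (2 ^ l * (2 * m + 1) - 1)
        ≤ 4 * (2 ^ l * (2 * m + 1)) := by
          refine (blockPos_le _).trans_eq ?_
          rw [Nat.sub_add_cancel (Nat.succ_le_of_lt (by positivity))]
      _ ≤ 4 * (2 ^ l * (2 * m + 2)) := by gcongr; norm_num
      _ = 2 ^ (l + 3) * (m + 1) := by ring

end BlockPositions

section BlockSum

variable {K : Set ℂ} {C : ℝ} {n : ℕ} {z : ℂ}

lemma suppFn_add_ofReal (hre : ∀ u ∈ K, u.re = 0) (z : ℂ) (d : ℝ) :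
    suppFn K (z + d) = suppFn K z := by
  rw [suppFn, suppFn]
  congr 1
  refine Set.image_congr fun u hu => ?_
  rw [add_mul, add_re, re_ofReal_mul, hre u hu, mul_zero, add_zero]

lemma pow_four_le_mul_one_add_norm_pow_four (z : ℂ) (d : ℝ) :
    d ^ 4 ≤ 8 * (1 + ‖z‖ ^ 4) * (1 + ‖z + d‖ ^ 4) := by
  have hd : |d| ≤ ‖z + d‖ + ‖z‖ := by
    simpa using norm_sub_le (z + d) z
  calc d ^ 4 = |d| ^ 4 := ((Even.pow_abs (by decide) d)).symm
    _ ≤ (‖z + d‖ + ‖z‖) ^ 4 := by gcongr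
    _ ≤ 2 ^ (4 - 1) * (‖z + d‖ ^ 4 + ‖z‖ ^ 4) := add_pow_le (norm_nonneg _) (norm_nonneg _) 4
    _ ≤ 8 * (1 + ‖z‖ ^ 4) * (1 + ‖z + d‖ ^ 4) := by
        norm_num
        nlinarith [mul_nonneg (pow_nonneg (norm_nonneg z) 4) (pow_nonneg (norm_nonneg (z + d)) 4)]

lemma one_add_norm_pow_four_le_mul_exp (hn : 0 < n) (z : ℂ) :
    1 + ‖z‖ ^ 4 ≤ 25 * n ^ 4 * Real.exp (‖z‖ / n) := by
  have hpow := Real.pow_div_factorial_le_exp (‖z‖ / n) (by positivity) 4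
  rw [div_pow, div_div, div_le_iff₀ (by positivity), show ((Nat.factorial 4 : ℕ) : ℝ) = 24 from rfl]
    at hpow
  have hone : 1 ≤ (n : ℝ) ^ 4 * Real.exp (‖z‖ / n) := one_le_mul_of_one_le_of_one_le
    (one_le_pow₀ (by exact_mod_cast hn)) (Real.one_le_exp (by positivity))
  linarith

lemma HasQuarticDecay.norm_comp_add_ofReal_le {G : ℂ → ℂ} (hG : HasQuarticDecay K C G)
    (hre : ∀ u ∈ K, u.re = 0) (hn : 0 < n) (hC : 0 < C) {s d : ℝ} (hs : 0 < s)
    (hsd : C * s ≤ d ^ 4) (z : ℂ) :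
    ‖G (z + d)‖ ≤ s⁻¹ * (200 * n ^ 4 * Real.exp (suppFn K z + ‖z‖ / n)) := by
  rw [le_inv_mul_iff₀ hs, ← mul_le_mul_iff_right₀ hC, ← mul_assoc]
  calc C * s * ‖G (z + d)‖
      ≤ 8 * (1 + ‖z‖ ^ 4) * (1 + ‖z + d‖ ^ 4) * ‖G (z + d)‖ :=
        mul_le_mul_of_nonneg_right (hsd.trans (pow_four_le_mul_one_add_norm_pow_four z d))
          (norm_nonneg _)
    _ = 8 * (1 + ‖z‖ ^ 4) * ((1 + ‖z + d‖ ^ 4) * ‖G (z + d)‖) := mul_assoc _ _ _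
    _ ≤ 8 * (25 * n ^ 4 * Real.exp (‖z‖ / n)) * (C * Real.exp (suppFn K z)) :=
        mul_le_mul (by gcongr; exact one_add_norm_pow_four_le_mul_exp hn z)
          ((hG.2 _).trans_eq (by rw [suppFn_add_ofReal hre])) (by positivity) (by positivity)
    _ = C * (200 * n ^ 4 * Real.exp (suppFn K z + ‖z‖ / n)) := by
        rw [Real.exp_add]
        ring

lemma norm_tsum_sub_le {F : ℕ → ℂ} (hF : Summable F) {j : ℕ} {B : ℝ} (hB : 0 ≤ B)
    (h : ∀ i ≠ j, ‖F i‖ ≤ (((i : ℝ) - j) ^ 2)⁻¹ * B) :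
    ‖∑' i, F i - F j‖ ≤ (∑' m : ℤ, ((m : ℝ) ^ 2)⁻¹) * B := by
  have hinj : Function.Injective fun i : ℕ => (i : ℤ) - j := fun a b hab => by simpa using hab
  have hZ : Summable fun m : ℤ => ((m : ℝ) ^ 2)⁻¹ := by
    simpa using Real.summable_one_div_int_pow.2 one_lt_two
  have hN : Summable fun i : ℕ => (((i : ℝ) - j) ^ 2)⁻¹ := by
    simpa [Function.comp_def] using hZ.comp_injective hinj
  have hterm : ∀ i, ‖if i = j then 0 else F i‖ ≤ (((i : ℝ) - j) ^ 2)⁻¹ * B := fun i => by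
    split_ifs with hij
    · rw [norm_zero]
      positivity
    · exact h i hij
  rw [hF.tsum_eq_add_tsum_ite j, add_sub_cancel_left]
  refine (tsum_of_norm_bounded (hN.mul_right B).hasSum hterm).trans ?_
  rw [tsum_mul_right]
  gcongr
  simpa [Function.comp_def] using tsum_comp_le_tsum_of_inj hZ (fun m => by positivity) hinj

/-- The superposition of the functions `G l`, with a copy of `G l` at every block of level `l`. -/
noncomputable def blockSum (G : ℕ → ℂ → ℂ) (z : ℂ) : ℂ :=
  ∑' j, G (blockLevel j) (z - blockPos j)

variable {G : ℕ → ℂ → ℂ}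

lemma norm_blockSum_term_le (hG : ∀ l : ℕ, HasQuarticDecay K (l + 1) (G l))
    (hre : ∀ u ∈ K, u.re = 0) (hn : 0 < n) (j : ℕ) (z : ℂ) :
    ‖G (blockLevel j) (z - blockPos j)‖ ≤
      (((j : ℝ) + 1) ^ 2)⁻¹ * (200 * n ^ 4 * Real.exp (suppFn K z + ‖z‖ / n)) := by
  have h := (hG (blockLevel j)).norm_comp_add_ofReal_le hre hn (by positivity)
    (s := ((j : ℝ) + 1) ^ 2) (d := -blockPos j) (by positivity)
    (by rw [Even.neg_pow (by decide)]; exact blockLevel_mul_sq_le_blockPos_pow_four j) z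
  simpa [← sub_eq_add_neg] using h

lemma summable_inv_natCast_add_one_sq : Summable fun j : ℕ => (((j : ℝ) + 1) ^ 2)⁻¹ := by
  simpa using (summable_nat_add_iff 1).2 (Real.summable_one_div_nat_pow.2 one_lt_two)

lemma summable_blockSum_term (hG : ∀ l : ℕ, HasQuarticDecay K (l + 1) (G l))
    (hre : ∀ u ∈ K, u.re = 0) (z : ℂ) :
    Summable fun j => G (blockLevel j) (z - blockPos j) :=
  .of_norm_bounded (summable_inv_natCast_add_one_sq.mul_right _)
    fun j => norm_blockSum_term_le hG hre one_pos j z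

lemma differentiable_blockSum (hG : ∀ l : ℕ, HasQuarticDecay K (l + 1) (G l))
    (hK : Bornology.IsBounded K) (hne : K.Nonempty) (hre : ∀ u ∈ K, u.re = 0) :
    Differentiable ℂ (blockSum G) := fun z₀ => by
  obtain ⟨r, hr⟩ := hK.exists_norm_le
  have hr0 : 0 ≤ r := hne.elim fun u hu => (norm_nonneg u).trans (hr u hu)
  set R := ‖z₀‖ + 1
  have hbound : ∀ j, ∀ z ∈ Metric.ball (0 : ℂ) R, ‖G (blockLevel j) (z - blockPos j)‖ ≤
      (((j : ℝ) + 1) ^ 2)⁻¹ * (200 * Real.exp (r * R + R)) := fun j z hz => by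
    have hzR : ‖z‖ ≤ R := (mem_ball_zero_iff.1 hz).le
    have hterm := norm_blockSum_term_le hG hre one_pos j z
    rw [Nat.cast_one, one_pow, mul_one, div_one] at hterm
    refine hterm.trans ?_
    gcongr
    exact (suppFn_le_mul_norm hne hr z).trans (by gcongr)
  refine (differentiableOn_tsum_of_summable_norm (summable_inv_natCast_add_one_sq.mul_right _)
    (fun j => ?_) Metric.isOpen_ball hbound).differentiableAt
    (Metric.isOpen_ball.mem_nhds (mem_ball_zero_iff.2 (lt_add_one _)))
  exact ((hG _).1.comp (differentiable_id.sub_const _)).differentiableOn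

lemma memExp_blockSum (hG : ∀ l : ℕ, HasQuarticDecay K (l + 1) (G l))
    (hK : Bornology.IsBounded K) (hne : K.Nonempty) (hre : ∀ u ∈ K, u.re = 0) :
    MemExp K (blockSum G) :=
  memExp_of_norm_le (differentiable_blockSum hG hK hne hre) fun n hn =>
    ⟨(∑' j : ℕ, (((j : ℝ) + 1) ^ 2)⁻¹) * (200 * n ^ 4), fun z => by
      rw [mul_assoc, ← tsum_mul_right]
      exact tsum_of_norm_bounded (summable_inv_natCast_add_one_sq.mul_right _).hasSum
        fun j => norm_blockSum_term_le hG hre hn j z⟩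

lemma norm_blockSum_add_blockPos_sub_le (hG : ∀ l : ℕ, HasQuarticDecay K (l + 1) (G l))
    (hre : ∀ u ∈ K, u.re = 0) (hn : 0 < n) (j : ℕ) (z : ℂ) :
    ‖blockSum G (z + blockPos j) - G (blockLevel j) z‖ ≤
      (∑' m : ℤ, ((m : ℝ) ^ 2)⁻¹) * (200 * n ^ 4) / (blockLevel j + 1) *
        Real.exp (suppFn K z + ‖z‖ / n) := by
  have h := norm_tsum_sub_le (summable_blockSum_term hG hre (z + blockPos j)) (j := j)
    (B := (blockLevel j + 1 : ℝ)⁻¹ * (200 * n ^ 4 * Real.exp (suppFn K z + ‖z‖ / n)))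
    (by positivity) fun i hij => ?_
  · rw [add_sub_cancel_right] at h
    refine h.trans_eq ?_
    ring
  have hij' : (i : ℝ) - j ≠ 0 := sub_ne_zero.2 (by exact_mod_cast hij)
  have hgap := blockLevel_mul_sq_le_blockPos_sub_pow_four hij
  have hterm := (hG (blockLevel i)).norm_comp_add_ofReal_le hre hn (by positivity)
    (s := ((i : ℝ) - j) ^ 2 * (blockLevel j + 1)) (d := blockPos j - blockPos i) (by positivity)
    (by linarith) z
  rw [mul_inv, mul_assoc] at hterm
  simpa [add_sub_assoc] using hterm

theorem fhcExp_blockSum (hG : ∀ l : ℕ, HasQuarticDecay K (l + 1) (G l))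
    (hK : Bornology.IsBounded K) (hne : K.Nonempty) (hre : ∀ u ∈ K, u.re = 0)
    (hdense : ∀ g, MemExp K g → ∀ m, IsExpLimit K (· ∈ G '' Set.Ici m) g) :
    FHCExp K (blockSum G) := by
  refine ⟨memExp_blockSum hG hK hne hre, fun g hg n hn ε hε => ?_⟩
  set S := (∑' m : ℤ, ((m : ℝ) ^ 2)⁻¹) * (200 * (n : ℝ) ^ 4)
  obtain ⟨m, hm⟩ := exists_nat_ge (S / (ε / 4))
  obtain ⟨_, ⟨l, hml, rfl⟩, hl⟩ := hdense g hg m (1 / n) (by positivity) (ε / 4) (by positivity)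
  have hSl : S / (l + 1) ≤ ε / 4 := by
    have hml' : (m : ℝ) ≤ l := by exact_mod_cast hml
    rw [div_le_comm₀ (by positivity) (by positivity)]
    linarith
  refine lowerDensity_pos_of_forall_blockLevel_eq (l := l) fun j hj => ?_
  refine (expNorm_le (C := ε / 2) fun z => ?_).trans_lt (half_lt_self hε)
  have hblock := norm_blockSum_add_blockPos_sub_le hG hre hn j z
  rw [hj] at hblock
  have hlz := hl z
  rw [one_div_mul_eq_div] at hlz
  calc ‖blockSum G (z + blockPos j) - g z‖
      ≤ ‖blockSum G (z + blockPos j) - G l z‖ + ‖G l z - g z‖ :=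
        norm_sub_le_norm_sub_add_norm_sub _ _ _
    _ ≤ ε / 4 * Real.exp (suppFn K z + ‖z‖ / n) + ε / 4 * Real.exp (suppFn K z + ‖z‖ / n) :=
        add_le_add (hblock.trans (by gcongr)) hlz
    _ = ε / 2 * Real.exp (suppFn K z + ‖z‖ / n) := by ring

end BlockSum

theorem exists_fhcExp_segment {v w : ℂ} (hvw : v ≠ w) (hv : v.re = 0) (hw : w.re = 0) :
    ∃ f, FHCExp (segment ℝ v w) f := by
  have hK := isBounded_segment v w
  have hne : (segment ℝ v w).Nonempty := ⟨v, left_mem_segment ℝ v w⟩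
  have hre : ∀ u ∈ segment ℝ v w, u.re = 0 := by
    rintro _ ⟨a, b, -, -, -, rfl⟩
    simp [hv, hw]
  obtain ⟨G, hG, hdense⟩ := exists_seq_hasQuarticDecay hK hne
  exact ⟨blockSum G, fhcExp_blockSum hG hK hne hre fun g hg =>
    hdense g (hg.isExpLimit_hasQuarticDecay_segment hvw hv hw)⟩

/-- **Theorem 1.** For `K = [v,w]`, `FHC(T₁, Exp(K)) ≠ ∅` iff `K` is a non-degenerate
closed line segment of the imaginary axis. -/
theorem stmt0 (v w : ℂ) :
    (∃ f : ℂ → ℂ, FHCExp (segment ℝ v w) f) ↔ (v ≠ w ∧ v.re = 0 ∧ w.re = 0) :=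
  ⟨fun ⟨_, hf⟩ => hf.ne_and_re_eq_zero_of_segment,
    fun ⟨hvw, hv, hw⟩ => exists_fhcExp_segment hvw hv hw⟩
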